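/- arXiv:2111.10301 — 5 statements merged into one kernel-verified Lean document; each statement's English description precedes it below -/
import Mathlib

section
/- Let x : [0,1] → ℝ be a nonconstant continuous function. Define q⁻ := sup{p > 0 : liminf_{n→∞} V_n^{(p)}(x) = ∞} and q⁺ := sup{p > 0 : limsup_{n→∞} V_n^{(p)}(x) = ∞}. Then q⁻ = inf{p ≥ 1 : liminf_{n→∞} V_n^{(p)}(x) = 0} and q⁺ = inf{p ≥ 1 : limsup_{n→∞} V_n^{(p)}(x) = 0}. -/
/-!
Write `V p n` for `dyadicVar x p n`. By uniform continuity, the dyadic increments of `x` are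
eventually smaller than any prescribed bound, so for `0 < p < q` and every `ε > 0` one has
`V q n ≤ ε * V p n` for all large `n` (`eventually_dyadicVar_le`). Hence, as soon as the lower
(upper) limit of `V p` is finite, that of `V q` vanishes for every `q > p`. This gives a single
critical exponent separating the values `∞` and `0`.

The restriction `1 ≤ p` in the infimum is harmless because the critical exponent is at least `1`:
a nonconstant `x` has `V 1 n` bounded below by a positive constant for large `n`
(`eventually_le_dyadicVar_one`), whence `V p n → ∞` for every `0 < p < 1`.
-/

open Filter Finset

noncomputable section

/-- The `n`-th dyadic `p`-th variation of `x`. -/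
def dyadicVar (x : ℝ → ℝ) (p : ℝ) (n : ℕ) : ℝ :=
  ∑ k ∈ Finset.range (2 ^ n), |x (((k : ℝ) + 1) / 2 ^ n) - x ((k : ℝ) / 2 ^ n)| ^ p

/-- `x` is nonconstant on `[0,1]`. -/
def Nonconstant (x : ℝ → ℝ) : Prop :=
  ∃ s ∈ Set.Icc (0 : ℝ) 1, ∃ t ∈ Set.Icc (0 : ℝ) 1, x s ≠ x t

theorem dyadicVar_nonneg (x : ℝ → ℝ) (p : ℝ) (n : ℕ) : 0 ≤ dyadicVar x p n :=
  Finset.sum_nonneg fun _ _ => Real.rpow_nonneg (abs_nonneg _) _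

theorem eventually_increment_lt {x : ℝ → ℝ} (hx : ContinuousOn x (Set.Icc 0 1)) {δ : ℝ}
    (hδ : 0 < δ) : ∀ᶠ n : ℕ in atTop, ∀ k ∈ Finset.range (2 ^ n),
      |x (((k : ℝ) + 1) / 2 ^ n) - x ((k : ℝ) / 2 ^ n)| < δ := by
  obtain ⟨η, hη, h⟩ := Metric.uniformContinuousOn_iff.1
    (isCompact_Icc.uniformContinuousOn_of_continuous hx) δ hδ
  have h2 : Tendsto (fun n : ℕ => (1 / 2 : ℝ) ^ n) atTop (nhds 0) :=
    tendsto_pow_atTop_nhds_zero_of_lt_one (by norm_num) (by norm_num)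
  filter_upwards [h2.eventually_lt_const hη] with n hn k hk
  have hpos : (0 : ℝ) < 2 ^ n := by positivity
  have hk' : (k : ℝ) + 1 ≤ 2 ^ n := by exact_mod_cast Finset.mem_range.1 hk
  have hk0 : (0 : ℝ) ≤ k := Nat.cast_nonneg k
  refine h _ ⟨by positivity, (div_le_one hpos).2 hk'⟩ _
    ⟨by positivity, (div_le_one hpos).2 (by linarith)⟩ ?_
  have he : ((k : ℝ) + 1) / 2 ^ n - (k : ℝ) / 2 ^ n = (1 / 2 : ℝ) ^ n := by
    rw [one_div, inv_pow]; field_simp; ring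
  rw [Real.dist_eq, he, abs_of_pos (by positivity)]
  exact hn

/-- Raising the exponent makes the variation asymptotically negligible: factor each term as
`a ^ q = a ^ (q - p) * a ^ p` and use that the increments tend to `0` uniformly. -/
theorem eventually_dyadicVar_le {x : ℝ → ℝ} (hx : ContinuousOn x (Set.Icc 0 1)) {p q ε : ℝ}
    (hp : 0 < p) (hpq : p < q) (hε : 0 < ε) :
    ∀ᶠ n : ℕ in atTop, dyadicVar x q n ≤ ε * dyadicVar x p n := by
  have hd : 0 < q - p := sub_pos.2 hpq
  filter_upwards [eventually_increment_lt hx (Real.rpow_pos_of_pos hε (1 / (q - p)))] with n hn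
  unfold dyadicVar
  rw [Finset.mul_sum]
  refine Finset.sum_le_sum fun k hk => ?_
  have h := hn k hk
  set a := |x (((k : ℝ) + 1) / 2 ^ n) - x ((k : ℝ) / 2 ^ n)|
  have ha : 0 ≤ a := abs_nonneg _
  have h1 : a ^ (q - p) ≤ ε := by
    calc a ^ (q - p) ≤ (ε ^ (1 / (q - p))) ^ (q - p) := Real.rpow_le_rpow ha h.le hd.le
      _ = ε := by rw [← Real.rpow_mul hε.le, one_div_mul_cancel hd.ne', Real.rpow_one]
  calc a ^ q = a ^ (q - p) * a ^ p := by
        rw [← Real.rpow_add_of_nonneg ha hd.le hp.le, sub_add_cancel]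
    _ ≤ ε * a ^ p := mul_le_mul_of_nonneg_right h1 (Real.rpow_nonneg ha _)

theorem abs_sub_le_dyadicVar_one (x : ℝ → ℝ) {n m : ℕ} (hm : m ≤ 2 ^ n) :
    |x ((m : ℝ) / 2 ^ n) - x 0| ≤ dyadicVar x 1 n := by
  have h := Finset.sum_range_sub (fun k : ℕ => x ((k : ℝ) / 2 ^ n)) m
  simp only [Nat.cast_zero, zero_div, Nat.cast_add, Nat.cast_one] at h
  rw [← h]
  unfold dyadicVar
  simp only [Real.rpow_one]
  exact (Finset.abs_sum_le_sum_abs _ _).trans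
    (Finset.sum_le_sum_of_subset_of_nonneg (Finset.range_mono hm) fun _ _ _ => abs_nonneg _)

theorem eventually_le_dyadicVar_one {x : ℝ → ℝ} (hx : ContinuousOn x (Set.Icc 0 1))
    (hnc : Nonconstant x) : ∃ c : ℝ, 0 < c ∧ ∀ᶠ n : ℕ in atTop, c ≤ dyadicVar x 1 n := by
  obtain ⟨s, hs, hs0⟩ : ∃ s ∈ Set.Icc (0 : ℝ) 1, x s ≠ x 0 := by
    by_contra! hcon
    obtain ⟨s, hs, t, ht, hst⟩ := hnc
    exact hst ((hcon s hs).trans (hcon t ht).symm)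
  have hpos : 0 < |x s - x 0| := abs_pos.2 (sub_ne_zero.2 hs0)
  refine ⟨|x s - x 0| / 2, half_pos hpos, ?_⟩
  -- Approximate `s` by the dyadic points `⌊s * 2 ^ n⌋ / 2 ^ n`.
  have hle : ∀ n : ℕ, ⌊s * 2 ^ n⌋₊ ≤ 2 ^ n := fun n => by
    refine Nat.floor_le_of_le ?_
    push_cast
    exact mul_le_of_le_one_left (by positivity) hs.2
  have hlim : Tendsto (fun n : ℕ => (⌊s * 2 ^ n⌋₊ : ℝ) / 2 ^ n) atTop (nhds s) :=
    (tendsto_nat_floor_mul_div_atTop hs.1).comp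
      (tendsto_pow_atTop_atTop_of_one_lt (one_lt_two : (1 : ℝ) < 2))
  have hmem : ∀ n : ℕ, (⌊s * 2 ^ n⌋₊ : ℝ) / 2 ^ n ∈ Set.Icc (0 : ℝ) 1 := fun n =>
    ⟨by positivity, (div_le_one (by positivity)).2 (by exact_mod_cast hle n)⟩
  have hxl : Tendsto (fun n : ℕ => |x ((⌊s * 2 ^ n⌋₊ : ℝ) / 2 ^ n) - x 0|) atTop
      (nhds |x s - x 0|) :=
    (((hx s hs).tendsto.comp (tendsto_nhdsWithin_iff.2
      ⟨hlim, Eventually.of_forall hmem⟩)).sub_const _).abs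
  filter_upwards [hxl.eventually_const_lt (half_lt_self hpos)] with n hn
  exact hn.le.trans (abs_sub_le_dyadicVar_one x (hle n))

theorem tendsto_dyadicVar_top {x : ℝ → ℝ} (hx : ContinuousOn x (Set.Icc 0 1))
    (hnc : Nonconstant x) {p : ℝ} (hp : 0 < p) (hp1 : p < 1) :
    Tendsto (fun n => ((dyadicVar x p n : ℝ) : EReal)) atTop (nhds ⊤) := by
  obtain ⟨c, hc, hcV⟩ := eventually_le_dyadicVar_one hx hnc
  refine EReal.tendsto_coe_nhds_top_iff.2 (tendsto_atTop.2 fun M => ?_)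
  have hM : 0 < |M| + 1 := by positivity
  filter_upwards [hcV, eventually_dyadicVar_le hx hp hp1 (div_pos hc hM)] with n h1 h2
  have h3 : c ≤ c * (dyadicVar x p n / (|M| + 1)) := by
    calc c ≤ _ := h1.trans h2
      _ = _ := by ring
  have h4 : |M| + 1 ≤ dyadicVar x p n :=
    (one_le_div hM).1 (le_of_mul_le_mul_left (by simpa using h3) hc)
  linarith [le_abs_self M]

/-- Wherever `u` stays below a fixed bound, `v` is eventually below any `ε > 0`; stated pointwise
so that it serves both `liminf` (along a subsequence) and `limsup`. -/
theorem eventually_lt_imp_le {u v : ℕ → ℝ}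
    (huv : ∀ ε : ℝ, 0 < ε → ∀ᶠ n in atTop, v n ≤ ε * u n) (M : ℝ) {ε : ℝ} (hε : 0 < ε) :
    ∀ᶠ n in atTop, (u n : EReal) < M → (v n : EReal) ≤ ε := by
  have hM : 0 < |M| + 1 := by positivity
  filter_upwards [huv _ (div_pos hε hM)] with n hn hlt
  have h1 : u n ≤ |M| + 1 := by
    have := EReal.coe_lt_coe_iff.1 hlt
    linarith [le_abs_self M]
  refine EReal.coe_le_coe_iff.2 (hn.trans ?_)
  calc ε / (|M| + 1) * u n ≤ ε / (|M| + 1) * (|M| + 1) :=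
        mul_le_mul_of_nonneg_left h1 (by positivity)
    _ = ε := div_mul_cancel₀ _ hM.ne'

theorem le_zero_of_forall_pos {a : EReal} (h : ∀ ε : ℝ, 0 < ε → a ≤ ε) : a ≤ 0 := by
  refine le_of_forall_gt fun b hb => ?_
  obtain ⟨r, hr0, hrb⟩ := EReal.lt_iff_exists_real_btwn.1 hb
  exact (h r (EReal.coe_pos.1 hr0)).trans_lt hrb

theorem liminf_eq_zero {u v : ℕ → ℝ} (hv : ∀ n, 0 ≤ v n)
    (huv : ∀ ε : ℝ, 0 < ε → ∀ᶠ n in atTop, v n ≤ ε * u n)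
    (hu : liminf (fun n => (u n : EReal)) atTop ≠ ⊤) :
    liminf (fun n => (v n : EReal)) atTop = 0 := by
  obtain ⟨M, hM, -⟩ := EReal.lt_iff_exists_real_btwn.1 (lt_top_iff_ne_top.2 hu)
  refine le_antisymm (le_zero_of_forall_pos fun ε hε => ?_)
    (le_liminf_of_le (h := Eventually.of_forall fun n => EReal.coe_nonneg.2 (hv n)))
  exact liminf_le_of_frequently_le
    ((frequently_lt_of_liminf_lt (h := hM)).mp (eventually_lt_imp_le huv M hε))

theorem limsup_eq_zero {u v : ℕ → ℝ} (hv : ∀ n, 0 ≤ v n)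
    (huv : ∀ ε : ℝ, 0 < ε → ∀ᶠ n in atTop, v n ≤ ε * u n)
    (hu : limsup (fun n => (u n : EReal)) atTop ≠ ⊤) :
    limsup (fun n => (v n : EReal)) atTop = 0 := by
  obtain ⟨M, hM, -⟩ := EReal.lt_iff_exists_real_btwn.1 (lt_top_iff_ne_top.2 hu)
  refine le_antisymm (le_zero_of_forall_pos fun ε hε => ?_)
    (le_limsup_of_frequently_le
      (Frequently.of_forall fun n => EReal.coe_nonneg.2 (hv n)))
  exact limsup_le_of_le (h := (eventually_lt_of_limsup_lt hM).mp (eventually_lt_imp_le huv M hε))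

/-- The critical exponent of a family of values `L p` that jumps from `⊤` to `0`: if `L = ⊤` on
`(0, 1)` and `L p ≠ ⊤` forces `L q = 0` for all `q > p`, the two descriptions agree. -/
theorem sSup_eq_sInf_of_jump {L : ℝ → EReal} (h1 : ∀ p, 0 < p → p < 1 → L p = ⊤)
    (hL : ∀ p q, 0 < p → p < q → L p ≠ ⊤ → L q = 0) :
    sSup ((fun p : ℝ => (p : EReal)) '' {p : ℝ | 0 < p ∧ L p = ⊤}) =
      sInf ((fun p : ℝ => (p : EReal)) '' {p : ℝ | 1 ≤ p ∧ L p = 0}) := by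
  apply le_antisymm
  · refine sSup_le ?_
    rintro _ ⟨a, ⟨-, haT⟩, rfl⟩
    refine le_sInf ?_
    rintro _ ⟨b, ⟨hb, hbz⟩, rfl⟩
    refine EReal.coe_le_coe_iff.2 (not_lt.1 fun hba => ?_)
    have := hL b a (by linarith) hba (by simp [hbz])
    simp [this] at haT
  · by_contra! hlt
    obtain ⟨c, hc, hc'⟩ := EReal.lt_iff_exists_real_btwn.1 hlt
    obtain ⟨d, hcd, hd⟩ := EReal.lt_iff_exists_real_btwn.1 hc'
    have hnot : ∀ p : ℝ, c ≤ p → 0 < p → L p ≠ ⊤ := fun p hcp hp hT =>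
      absurd ((le_sSup (Set.mem_image_of_mem (fun p : ℝ => (p : EReal))
        (show p ∈ {p : ℝ | 0 < p ∧ L p = ⊤} from ⟨hp, hT⟩))).trans_lt hc)
        (not_lt.2 (EReal.coe_le_coe_iff.2 hcp))
    have hc1 : 1 ≤ c := by
      by_contra! hcl
      -- The midpoint of `max c 0` and `1` lies in `(0, 1)` and above `c`.
      have hm : max c 0 < 1 := max_lt hcl one_pos
      have h0 := le_max_right c 0
      have h2 := le_max_left c 0
      exact hnot ((max c 0 + 1) / 2) (by linarith) (by linarith)
        (h1 _ (by linarith) (by linarith))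
    have hcd' : c < d := EReal.coe_lt_coe_iff.1 hcd
    have hz := hL c d (by linarith) hcd' (hnot c le_rfl (by linarith))
    exact absurd (sInf_le (Set.mem_image_of_mem (fun p : ℝ => (p : EReal))
      (show d ∈ {p : ℝ | 1 ≤ p ∧ L p = 0} from ⟨by linarith, hz⟩))) (not_le.2 hd)

theorem stmt0 (x : ℝ → ℝ) (hx : ContinuousOn x (Set.Icc 0 1)) (hnc : Nonconstant x) :
    (sSup ((fun p : ℝ => (p : EReal)) ''
        {p : ℝ | 0 < p ∧ liminf (fun n => ((dyadicVar x p n : ℝ) : EReal)) atTop = ⊤}) =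
      sInf ((fun p : ℝ => (p : EReal)) ''
        {p : ℝ | 1 ≤ p ∧ liminf (fun n => ((dyadicVar x p n : ℝ) : EReal)) atTop = 0})) ∧
    (sSup ((fun p : ℝ => (p : EReal)) ''
        {p : ℝ | 0 < p ∧ limsup (fun n => ((dyadicVar x p n : ℝ) : EReal)) atTop = ⊤}) =
      sInf ((fun p : ℝ => (p : EReal)) ''
        {p : ℝ | 1 ≤ p ∧ limsup (fun n => ((dyadicVar x p n : ℝ) : EReal)) atTop = 0})) := by
  exact ⟨sSup_eq_sInf_of_jump
      (fun p hp hp1 => (tendsto_dyadicVar_top hx hnc hp hp1).liminf_eq)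
      (fun p q hp hpq => liminf_eq_zero (dyadicVar_nonneg x q)
        (fun _ hε => eventually_dyadicVar_le hx hp hpq hε)),
    sSup_eq_sInf_of_jump
      (fun p hp hp1 => (tendsto_dyadicVar_top hx hnc hp hp1).limsup_eq)
      (fun p q hp hpq => limsup_eq_zero (dyadicVar_nonneg x q)
        (fun _ hε => eventually_dyadicVar_le hx hp hpq hε))⟩
end
end

section
/- Let x : [0,1] → ℝ be a nonconstant continuous function whose Faber–Schauder coefficients satisfy the reverse Jensen condition, and set ξ⁺ := limsup_{n→∞} ξ_n and ξ⁻ := liminf_{n→∞} ξ_n, assumed to satisfy ξ⁺ < 1 and ξ⁻ < 1. Then limsup_{n→∞} V_n^{(p)}(x) = 0 for every p > 1/(1 − ξ⁺) and limsup_{n→∞} V_n^{(p)}(x) = ∞ for every p < 1/(1 − ξ⁺); moreover liminf_{n→∞} V_n^{(p)}(x) = 0 for every p > 1/(1 − ξ⁻) and liminf_{n→∞} V_n^{(p)}(x) = ∞ for every p < 1/(1 − ξ⁻). -/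
/-!
The dyadic slopes `M_n(k) = 2ⁿ (x((k+1)2⁻ⁿ) - x(k2⁻ⁿ))` form a martingale for the uniform
distribution on dyadic intervals, with increments `± 2^{m/2} θ_{m,k}`, and
`V_n^{(p)}(x) = 2^{n(1-p)} E|M_n|^p`. Orthogonality gives `E M_n² = S_n² := M_0² + s_n²`, while the
quantity in the reverse Jensen condition is `E [M]_n^{p/2}`.

The increments are symmetric and their absolute values are predictable, which makes Burkholder's
inequality for even exponents elementary (`burkholder`): `E M_n^{2q} ≤ C E (M_0² + [M]_n)^q`.
Combined with the upper half of the reverse Jensen condition it shows that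
`E M_n^{2q} ≤ 2^{o(n)} S_n^{2q}`. Interpolating between moments, with `E M_n² = S_n²` known exactly,
yields `E|M_n|^p = 2^{o(n)} S_n^p` for every `p > 0` (`slopeMoment_le`, `le_slopeMoment`).

Since `x` is nonconstant, `S_n` is comparable to `2^{n ξ_n}`; this includes affine `x`, for which
`s_n = 0` and `ξ_n = 0` by the convention `log 0 = 0`. Hence
`V_n^{(p)}(x) = 2^{n (1 - p (1 - ξ_n)) + o(n)}` (`dyadicVar_bounds`), and the four claims follow since
`ξ_n` is bounded, so that its real upper and lower limits have their usual meaning.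
-/

open Filter Finset

noncomputable section

/-- `x` admits the Hurst roughness exponent `H ∈ (0,1]`. -/
def HasHurstExponent (x : ℝ → ℝ) (H : ℝ) : Prop :=
  0 < H ∧ H ≤ 1 ∧
  (∀ p : ℝ, 1 / H < p → Tendsto (dyadicVar x p) atTop (nhds 0)) ∧
  (∀ p : ℝ, 0 < p → p < 1 / H → Tendsto (dyadicVar x p) atTop atTop)

/-- Faber–Schauder coefficient `θ_{m,k}` of `x`. -/
def fsCoeff (x : ℝ → ℝ) (m k : ℕ) : ℝ :=
  2 ^ ((m : ℝ) / 2) *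
    (2 * x ((2 * (k : ℝ) + 1) / 2 ^ (m + 1)) - x ((k : ℝ) / 2 ^ m) - x (((k : ℝ) + 1) / 2 ^ m))

/-- `s_n = (∑_{m<n} ∑_{k<2^m} θ_{m,k}²)^{1/2}`. -/
def sSeq (x : ℝ → ℝ) (n : ℕ) : ℝ :=
  Real.sqrt (∑ m ∈ Finset.range n, ∑ k ∈ Finset.range (2 ^ m), fsCoeff x m k ^ 2)

/-- `ξ_n = (1/n) log₂ s_n`. -/
def xiSeq (x : ℝ → ℝ) (n : ℕ) : ℝ := Real.logb 2 (sSeq x n) / n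

/-- A nondecreasing function `ϱ : ℕ → [1,∞)` is subexponential if `(1/n) log ϱ(n) → 0`. -/
def Subexponential (ϱ : ℕ → ℝ) : Prop :=
  Monotone ϱ ∧ (∀ n, 1 ≤ ϱ n) ∧ Tendsto (fun n : ℕ => Real.log (ϱ n) / n) atTop (nhds 0)

/-- The quantity `2^{-(n-1)} ∑_{k<2^{n-1}} (∑_{m<n} 2^m θ²_{m,⌊2^{m-n+1}k⌋})^{p/2}`;
note that `⌊2^{m-n+1}k⌋ = k / 2^{n-1-m}` (natural number division). -/
def RJquantity (x : ℝ → ℝ) (p : ℝ) (n : ℕ) : ℝ :=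
  (∑ k ∈ Finset.range (2 ^ (n - 1)),
      (∑ m ∈ Finset.range n, 2 ^ m * fsCoeff x m (k / 2 ^ (n - 1 - m)) ^ 2) ^ (p / 2)) /
    2 ^ (n - 1)

/-- The reverse Jensen condition on the Faber–Schauder coefficients of `x`. -/
def ReverseJensen (x : ℝ → ℝ) : Prop :=
  ∀ p : ℝ, 1 ≤ p → ∃ np : ℕ, ∃ ϱ : ℕ → ℝ, Subexponential ϱ ∧
    ∀ n : ℕ, np ≤ n →
      (ϱ n)⁻¹ * sSeq x n ^ p ≤ RJquantity x p n ∧ RJquantity x p n ≤ ϱ n * sSeq x n ^ p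

/-! ### The slope martingale and its second moment -/

/-- The slope of `x` on the dyadic interval `[k 2⁻ⁿ, (k+1) 2⁻ⁿ]`. -/
def slope2 (x : ℝ → ℝ) (n k : ℕ) : ℝ :=
  2 ^ n * (x (((k : ℝ) + 1) / 2 ^ n) - x ((k : ℝ) / 2 ^ n))

/-- The increment of the slope martingale on the interval `[k 2⁻ⁿ, (k+1) 2⁻ⁿ]`: its left and right
halves have slopes `slope2 x n k ± slopeJump x n k`. It equals `2^{n/2} θ_{n,k}`. -/
def slopeJump (x : ℝ → ℝ) (n k : ℕ) : ℝ :=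
  2 ^ n * (2 * x ((2 * (k : ℝ) + 1) / 2 ^ (n + 1)) - x ((k : ℝ) / 2 ^ n)
    - x (((k : ℝ) + 1) / 2 ^ n))

/-- The quadratic variation of the slope martingale up to level `n`, on the `k`-th dyadic interval
of level `n`; `k / 2 ^ (n - m)` is the index of the level-`m` interval containing it. -/
def sqVar (x : ℝ → ℝ) (n k : ℕ) : ℝ :=
  ∑ m ∈ range n, slopeJump x m (k / 2 ^ (n - m)) ^ 2

/-- The `p`-th absolute moment `E|M_n|^p` of the slope martingale, for the uniform distribution on
the `2ⁿ` dyadic intervals of level `n`. -/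
def slopeMoment (x : ℝ → ℝ) (p : ℝ) (n : ℕ) : ℝ :=
  (∑ k ∈ range (2 ^ n), |slope2 x n k| ^ p) / 2 ^ n

/-- `S_n = (M_0² + s_n²)^{1/2}`, which is the `L²` norm of the slope martingale at level `n`
(`slopeMoment_two`). -/
def slopeRms (x : ℝ → ℝ) (n : ℕ) : ℝ := Real.sqrt (slope2 x 0 0 ^ 2 + sSeq x n ^ 2)

theorem fsCoeff_sq (x : ℝ → ℝ) (m k : ℕ) :
    2 ^ m * fsCoeff x m k ^ 2 = slopeJump x m k ^ 2 := by
  have h : ((2 : ℝ) ^ ((m : ℝ) / 2)) ^ 2 = 2 ^ m := by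
    rw [← Real.rpow_natCast, ← Real.rpow_mul (by norm_num)]
    simp
  simp only [fsCoeff, slopeJump, mul_pow, h]
  ring

theorem slope2_even (x : ℝ → ℝ) (n k : ℕ) :
    slope2 x (n + 1) (2 * k) = slope2 x n k + slopeJump x n k := by
  have h : ((2 * k : ℕ) : ℝ) / 2 ^ (n + 1) = k / 2 ^ n := by
    push_cast; rw [pow_succ]; field_simp
  simp only [slope2, slopeJump, h]
  push_cast
  ring

theorem slope2_odd (x : ℝ → ℝ) (n k : ℕ) :
    slope2 x (n + 1) (2 * k + 1) = slope2 x n k - slopeJump x n k := by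
  have h : (((2 * k + 1 : ℕ) : ℝ) + 1) / 2 ^ (n + 1) = (k + 1) / 2 ^ n := by
    push_cast; rw [pow_succ]; field_simp; ring
  simp only [slope2, slopeJump, h]
  push_cast
  ring

theorem sum_range_two_mul (f : ℕ → ℝ) (N : ℕ) :
    ∑ j ∈ range (2 * N), f j = ∑ k ∈ range N, (f (2 * k) + f (2 * k + 1)) := by
  induction N with
  | zero => simp
  | succ N ih => rw [mul_add_one, sum_range_succ, sum_range_succ, ih, sum_range_succ]; ring

theorem sum_range_two_pow_succ (f : ℕ → ℝ) (n : ℕ) :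
    ∑ j ∈ range (2 ^ (n + 1)), f j = ∑ k ∈ range (2 ^ n), (f (2 * k) + f (2 * k + 1)) := by
  rw [pow_succ', sum_range_two_mul]

theorem sqVar_succ (x : ℝ → ℝ) (n k j : ℕ) (hj : j / 2 = k) :
    sqVar x (n + 1) j = sqVar x n k + slopeJump x n k ^ 2 := by
  rw [sqVar, sum_range_succ, sqVar]
  congr 1
  · refine sum_congr rfl fun m hm => ?_
    have : n + 1 - m = (n - m) + 1 := by have := mem_range.1 hm; omega
    rw [this, pow_succ' 2 (n - m), ← Nat.div_div_eq_div_mul, hj]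
  · simp [hj]

theorem sqVar_nonneg (x : ℝ → ℝ) (n k : ℕ) : 0 ≤ sqVar x n k :=
  sum_nonneg fun _ _ => sq_nonneg _

theorem sSeq_sq (x : ℝ → ℝ) (n : ℕ) :
    sSeq x n ^ 2 = ∑ m ∈ range n, ∑ k ∈ range (2 ^ m), fsCoeff x m k ^ 2 :=
  Real.sq_sqrt (sum_nonneg fun _ _ => sum_nonneg fun _ _ => sq_nonneg _)

theorem sSeq_nonneg (x : ℝ → ℝ) (n : ℕ) : 0 ≤ sSeq x n := Real.sqrt_nonneg _

theorem sSeq_mono (x : ℝ → ℝ) : Monotone (sSeq x) := by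
  refine monotone_nat_of_le_succ fun n => Real.sqrt_le_sqrt ?_
  rw [sum_range_succ]
  exact le_add_of_nonneg_right (sum_nonneg fun _ _ => sq_nonneg _)

theorem slopeRms_sq (x : ℝ → ℝ) (n : ℕ) :
    slopeRms x n ^ 2 = slope2 x 0 0 ^ 2 + sSeq x n ^ 2 := Real.sq_sqrt (by positivity)

theorem slopeRms_nonneg (x : ℝ → ℝ) (n : ℕ) : 0 ≤ slopeRms x n := Real.sqrt_nonneg _

theorem sum_slope2_sq (x : ℝ → ℝ) (n : ℕ) :
    ∑ k ∈ range (2 ^ n), slope2 x n k ^ 2 = 2 ^ n * slopeRms x n ^ 2 := by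
  rw [slopeRms_sq, sSeq_sq]
  induction n with
  | zero => simp
  | succ n ih =>
    rw [sum_range_two_pow_succ, sum_range_succ]
    have : ∀ k, slope2 x (n + 1) (2 * k) ^ 2 + slope2 x (n + 1) (2 * k + 1) ^ 2
        = 2 * slope2 x n k ^ 2 + 2 * 2 ^ n * fsCoeff x n k ^ 2 := by
      intro k
      rw [slope2_even, slope2_odd, mul_assoc, fsCoeff_sq]; ring
    simp only [this, sum_add_distrib, ← mul_sum, ih]
    ring

theorem slopeMoment_two (x : ℝ → ℝ) (n : ℕ) : slopeMoment x 2 n = slopeRms x n ^ 2 := by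
  rw [slopeMoment]
  simp only [Real.rpow_two, sq_abs]
  rw [sum_slope2_sq]
  field_simp

/-! ### Burkholder's inequality for even exponents -/

theorem pow_mul_pow_le (a d : ℝ) (r m : ℕ) (hm : m ≤ 2 * r) :
    a ^ m * d ^ (2 * r + 2 - m) ≤ a ^ (2 * r) * d ^ 2 + (d ^ 2) ^ (r + 1) := by
  have e1 : a ^ (2 * r) = |a| ^ (2 * r) := ((even_two_mul r).pow_abs a).symm
  have e2 : (d ^ 2) ^ (r + 1) = |d| ^ (2 * r + 2) := by
    rw [← sq_abs, ← pow_mul]; ring_nf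
  rw [e1, e2, ← sq_abs d]
  refine (le_abs_self _).trans ?_
  rw [abs_mul, abs_pow, abs_pow]
  have ha := abs_nonneg a
  have hd := abs_nonneg d
  rcases le_total |a| |d| with h | h
  · have : |a| ^ m * |d| ^ (2 * r + 2 - m) ≤ |d| ^ m * |d| ^ (2 * r + 2 - m) := by gcongr
    rw [← pow_add, Nat.add_sub_cancel' (by omega)] at this
    have : 0 ≤ |a| ^ (2 * r) * |d| ^ 2 := by positivity
    linarith
  · have h1 : 2 * r + 2 - m = (2 * r - m) + 2 := by omega
    have : |a| ^ m * (|d| ^ (2 * r - m) * |d| ^ 2) ≤ |a| ^ m * (|a| ^ (2 * r - m) * |d| ^ 2) := by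
      gcongr
    rw [← mul_assoc _ _ (|d| ^ 2), ← mul_assoc _ _ (|d| ^ 2), ← pow_add,
      Nat.add_sub_cancel' (by omega)] at this
    rw [h1, pow_add, ← mul_assoc]
    have : 0 ≤ |d| ^ (2 * r + 2) := by positivity
    linarith

/-- The binomial expansion of the symmetrised power: the terms linear in `d` cancel, and every further
term is at most `a ^ (2r) d ^ 2` or `d ^ (2r+2)`, according to which of `|a|`, `|d|` is larger. -/
theorem add_pow_add_sub_pow_le (r : ℕ) : ∃ C : ℝ, 1 ≤ C ∧ ∀ a d : ℝ,
    (a + d) ^ (2 * r + 2) + (a - d) ^ (2 * r + 2)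
      ≤ 2 * a ^ (2 * r + 2) + 2 * C * (a ^ (2 * r) * d ^ 2 + (d ^ 2) ^ (r + 1)) := by
  refine ⟨1 + ∑ m ∈ range (2 * r + 1), ((2 * r + 2).choose m : ℝ), ?_, fun a d => ?_⟩
  · have : (0:ℝ) ≤ ∑ m ∈ range (2 * r + 1), ((2 * r + 2).choose m : ℝ) := by positivity
    linarith
  · set E := a ^ (2 * r) * d ^ 2 + (d ^ 2) ^ (r + 1) with hE
    have hE0 : 0 ≤ E := by
      have := (even_two_mul r).pow_nonneg a
      positivity
    have key : ∀ d' : ℝ, d' ^ 2 = d ^ 2 → (a + d') ^ (2 * r + 2) ≤ a ^ (2 * r + 2)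
        + (2 * r + 2) * a ^ (2 * r + 1) * d'
        + (∑ m ∈ range (2 * r + 1), ((2 * r + 2).choose m : ℝ)) * E := by
      intro d' hd
      rw [add_pow, sum_range_succ, sum_range_succ, sum_mul]
      have h1 : ∀ m ∈ range (2 * r + 1), a ^ m * d' ^ (2 * r + 2 - m) * ((2 * r + 2).choose m : ℝ)
          ≤ ((2 * r + 2).choose m : ℝ) * E := by
        intro m hm
        rw [mul_comm]
        have := pow_mul_pow_le a d' r m (by have := mem_range.1 hm; omega)
        rw [hd] at this
        gcongr
      have h2 := sum_le_sum h1
      have h3 : 2 * r + 2 - (2 * r + 1) = 1 := by omega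
      have h4 : (2 * r + 2).choose (2 * r + 1) = 2 * r + 2 := Nat.choose_succ_self_right _
      rw [h3, h4]
      simp only [Nat.sub_self, Nat.choose_self]
      push_cast
      linarith
    have h1 := key d rfl
    have h2 := key (-d) (by ring)
    rw [← sub_eq_add_neg] at h2
    linarith

/-- The Burkholder inequality with exponent `2r+2` for the dyadic slope martingale `M`, with
`Q = M_0² + [M]`: the process `M^{2r+2} - C (M^{2r} Q + Q^{r+1})` is a supermartingale that starts
at a nonpositive value, and Young's inequality absorbs the mixed term `M^{2r} Q`. -/
theorem burkholder (x : ℝ → ℝ) (r : ℕ) : ∃ C : ℝ, 1 ≤ C ∧ ∀ n,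
    ∑ k ∈ range (2 ^ n), slope2 x n k ^ (2 * r + 2)
      ≤ C * ∑ k ∈ range (2 ^ n), (slope2 x 0 0 ^ 2 + sqVar x n k) ^ (r + 1) := by
  obtain ⟨C, hC, hstep⟩ := add_pow_add_sub_pow_le r
  set P : ℝ → ℝ → ℝ := fun a Q => a ^ (2 * r + 2) - C * (a ^ (2 * r) * Q + Q ^ (r + 1)) with hP
  have hsuper : ∀ a d Q : ℝ, 0 ≤ Q → P (a + d) (Q + d ^ 2) + P (a - d) (Q + d ^ 2) ≤ 2 * P a Q := by
    intro a d Q hQ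
    have h1 := hstep a d
    have h2 : Q ^ (r + 1) + (d ^ 2) ^ (r + 1) ≤ (Q + d ^ 2) ^ (r + 1) :=
      pow_add_pow_le hQ (sq_nonneg d) (by omega)
    have h3 : 2 * a ^ (2 * r) ≤ (a + d) ^ (2 * r) + (a - d) ^ (2 * r) := by
      have := (even_two_mul r).convexOn_pow.2 (Set.mem_univ (a + d)) (Set.mem_univ (a - d))
        (show (0:ℝ) ≤ 1 / 2 by norm_num) (show (0:ℝ) ≤ 1 / 2 by norm_num) (by norm_num)
      simp only [smul_eq_mul] at this
      rw [show 1 / 2 * (a + d) + 1 / 2 * (a - d) = a by ring] at this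
      linarith
    have h4 : 2 * a ^ (2 * r) * (Q + d ^ 2)
        ≤ ((a + d) ^ (2 * r) + (a - d) ^ (2 * r)) * (Q + d ^ 2) := by gcongr
    have h5 : C * (2 * a ^ (2 * r) * (Q + d ^ 2) + 2 * (Q ^ (r + 1) + (d ^ 2) ^ (r + 1)))
      ≤ C * (((a + d) ^ (2 * r) + (a - d) ^ (2 * r)) * (Q + d ^ 2) + 2 * (Q + d ^ 2) ^ (r + 1)) := by
      gcongr
    simp only [hP]
    linarith
  have hsum : ∀ n, ∑ k ∈ range (2 ^ n), P (slope2 x n k) (slope2 x 0 0 ^ 2 + sqVar x n k) ≤ 0 := by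
    intro n
    induction n with
    | zero =>
      simp only [pow_zero, range_one, sum_singleton, hP, sqVar, range_zero, sum_empty, add_zero]
      have : 0 ≤ slope2 x 0 0 ^ (2 * r + 2) := (Even.pow_nonneg ⟨r + 1, by ring⟩ _)
      have e : slope2 x 0 0 ^ (2 * r) * slope2 x 0 0 ^ 2 + (slope2 x 0 0 ^ 2) ^ (r + 1)
        = 2 * slope2 x 0 0 ^ (2 * r + 2) := by ring
      rw [e]
      nlinarith
    | succ n ih =>
      rw [sum_range_two_pow_succ]
      have : ∀ k ∈ range (2 ^ n),
          P (slope2 x (n + 1) (2 * k)) (slope2 x 0 0 ^ 2 + sqVar x (n + 1) (2 * k))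
          + P (slope2 x (n + 1) (2 * k + 1)) (slope2 x 0 0 ^ 2 + sqVar x (n + 1) (2 * k + 1))
          ≤ 2 * P (slope2 x n k) (slope2 x 0 0 ^ 2 + sqVar x n k) := by
        intro k _
        rw [sqVar_succ x n k _ (by omega), sqVar_succ x n k _ (by omega), slope2_even, slope2_odd,
          ← add_assoc]
        exact hsuper _ _ _ (add_nonneg (sq_nonneg _) (sqVar_nonneg _ _ _))
      refine (sum_le_sum this).trans ?_
      rw [← mul_sum]
      linarith
  refine ⟨2 * C * ((2 * C) ^ r + 1), ?_, fun n => ?_⟩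
  · have : 0 ≤ (2 * C) ^ r := by positivity
    nlinarith
  · have hpt : ∀ a Q : ℝ, 0 ≤ Q →
        a ^ (2 * r + 2) ≤ 2 * P a Q + 2 * C * ((2 * C) ^ r + 1) * Q ^ (r + 1) := by
      intro a Q hQ
      have h0 : 0 ≤ a ^ (2 * r) := (even_two_mul r).pow_nonneg a
      have key : 2 * C * (a ^ (2 * r) * Q)
          ≤ a ^ (2 * r + 2) + 2 * C * ((2 * C) ^ r * Q ^ (r + 1)) := by
        rcases le_total (2 * C * Q) (a ^ 2) with h | h
        · have h1 : a ^ (2 * r) * (2 * C * Q) ≤ a ^ (2 * r) * a ^ 2 := by gcongr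
          have h2 : 0 ≤ 2 * C * ((2 * C) ^ r * Q ^ (r + 1)) := by positivity
          rw [pow_add]
          linarith
        · have h1 : a ^ (2 * r) ≤ (2 * C * Q) ^ r := by rw [pow_mul]; gcongr
          have h2 : 2 * C * (a ^ (2 * r) * Q) ≤ 2 * C * ((2 * C * Q) ^ r * Q) := by gcongr
          have h3 : 0 ≤ a ^ (2 * r + 2) := (Even.pow_nonneg ⟨r + 1, by ring⟩ _)
          rw [mul_pow, mul_assoc ((2 * C) ^ r), ← pow_succ] at h2
          linarith
      simp only [hP]
      linarith
    have h1 := sum_le_sum fun k (_ : k ∈ range (2 ^ n)) =>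
      hpt (slope2 x n k) _ (add_nonneg (sq_nonneg (slope2 x 0 0)) (sqVar_nonneg x n k))
    rw [sum_add_distrib, ← mul_sum, ← mul_sum] at h1
    linarith [hsum n]

/-! ### Moments of the slopes up to subexponential factors -/

theorem eventually_const_le (K : ℝ) {δ : ℝ} (hδ : 0 < δ) :
    ∀ᶠ n : ℕ in atTop, K ≤ (2 : ℝ) ^ (δ * n) := by
  have h : Tendsto (fun n : ℕ => (2 : ℝ) ^ (δ * n)) atTop atTop :=
    (tendsto_rpow_atTop_of_base_gt_one 2 (by norm_num)).comp
      (tendsto_natCast_atTop_atTop.const_mul_atTop hδ)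
  exact h.eventually_ge_atTop K

theorem Subexponential.eventually_le {ϱ : ℕ → ℝ} (h : Subexponential ϱ) {δ : ℝ} (hδ : 0 < δ) :
    ∀ᶠ n : ℕ in atTop, ϱ n ≤ (2 : ℝ) ^ (δ * n) := by
  have hlog : 0 < Real.log 2 := Real.log_pos (by norm_num)
  filter_upwards [h.2.2.eventually_lt_const (mul_pos hδ hlog), eventually_gt_atTop 0] with n hn hn0
  have hn0' : (0 : ℝ) < n := by exact_mod_cast hn0
  have hpos : 0 < ϱ n := zero_lt_one.trans_le (h.2.1 n)
  rw [div_lt_iff₀ hn0'] at hn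
  rw [← Real.log_le_log_iff hpos (by positivity), Real.log_rpow (by norm_num)]
  linarith

/-- The mean of `[M]_n^{r+1}` is the reverse Jensen quantity: `[M]_n` is predictable, so each
interval of level `n - 1` is counted twice at level `n`. -/
theorem sum_sqVar_pow (x : ℝ → ℝ) (r n : ℕ) (hn : n ≠ 0) :
    ∑ k ∈ range (2 ^ n), sqVar x n k ^ (r + 1) = 2 ^ n * RJquantity x (2 * r + 2) n := by
  obtain ⟨n, rfl⟩ := Nat.exists_eq_succ_of_ne_zero hn
  have hexp : (2 * (r : ℝ) + 2) / 2 = (r + 1 : ℕ) := by push_cast; ring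
  have hQ : ∀ k j : ℕ, j / 2 = k → sqVar x (n + 1) j
      = ∑ m ∈ range (n + 1), 2 ^ m * fsCoeff x m (k / 2 ^ (n - m)) ^ 2 := by
    intro k j hj
    rw [sqVar_succ x n k j hj, sqVar, sum_range_succ]
    simp [fsCoeff_sq]
  rw [sum_range_two_pow_succ, RJquantity]
  simp only [Nat.succ_eq_add_one, Nat.add_sub_cancel, hexp, Real.rpow_natCast]
  rw [mul_div_assoc', mul_comm, ← mul_div_assoc', mul_comm, pow_succ, mul_div_assoc, mul_comm]
  rw [sum_congr rfl fun k _ => by rw [hQ k (2 * k) (by omega), hQ k (2 * k + 1) (by omega),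
    ← two_mul], ← mul_sum]
  field_simp

theorem slopeMoment_even_le (x : ℝ → ℝ) (hRJ : ReverseJensen x) (r : ℕ) {δ : ℝ} (hδ : 0 < δ) :
    ∀ᶠ n : ℕ in atTop, slopeMoment x (2 * r + 2) n
      ≤ (2 : ℝ) ^ (δ * n) * slopeRms x n ^ (2 * r + 2) := by
  obtain ⟨C, hC, hB⟩ := burkholder x r
  obtain ⟨np, ϱ, hϱ, hJ⟩ := hRJ (2 * r + 2) (by
    have : (0 : ℝ) ≤ r := r.cast_nonneg
    linarith)
  filter_upwards [hϱ.eventually_le (half_pos hδ), eventually_const_le (C * 2 ^ (r + 1)) (half_pos hδ),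
    eventually_ge_atTop np, eventually_ne_atTop 0] with n h1 h2 h3 h4
  set S := slopeRms x n with hS
  have hcast : (2 * (r : ℝ) + 2) = (2 * r + 2 : ℕ) := by push_cast; ring
  have hRJn : RJquantity x (2 * r + 2) n ≤ ϱ n * sSeq x n ^ (2 * r + 2) := by
    have := (hJ n h3).2
    rw [hcast] at this ⊢
    rwa [Real.rpow_natCast] at this
  have hS2 := slopeRms_sq x n
  have hS0 := slopeRms_nonneg x n
  have hM : (slope2 x 0 0 ^ 2) ^ (r + 1) ≤ S ^ (2 * r + 2) := by
    rw [show 2 * r + 2 = 2 * (r + 1) by ring, pow_mul]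
    refine pow_le_pow_left₀ (sq_nonneg _) ?_ _
    rw [hS, hS2]
    linarith [sq_nonneg (sSeq x n)]
  have hs : sSeq x n ^ (2 * r + 2) ≤ S ^ (2 * r + 2) := by
    rw [show 2 * r + 2 = 2 * (r + 1) by ring, pow_mul, pow_mul]
    refine pow_le_pow_left₀ (sq_nonneg _) ?_ _
    rw [hS, hS2]
    linarith [sq_nonneg (slope2 x 0 0)]
  have hρ : 1 ≤ ϱ n := hϱ.2.1 n
  have hmom : slopeMoment x (2 * r + 2) n
      = (∑ k ∈ range (2 ^ n), slope2 x n k ^ (2 * r + 2)) / 2 ^ n := by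
    rw [slopeMoment, hcast]
    simp only [Real.rpow_natCast]
    congr 1
    refine sum_congr rfl fun k _ => Even.pow_abs ⟨r + 1, by ring⟩ _
  have hsum : ∑ k ∈ range (2 ^ n), (slope2 x 0 0 ^ 2 + sqVar x n k) ^ (r + 1)
      ≤ 2 ^ r * (2 ^ n * (slope2 x 0 0 ^ 2) ^ (r + 1) + 2 ^ n * RJquantity x (2 * r + 2) n) := by
    rw [← sum_sqVar_pow x r n h4]
    calc _ ≤ ∑ k ∈ range (2 ^ n), 2 ^ r * ((slope2 x 0 0 ^ 2) ^ (r + 1) + sqVar x n k ^ (r + 1)) :=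
          sum_le_sum fun k _ => add_pow_le (sq_nonneg _) (sqVar_nonneg x n k) (r + 1)
      _ = _ := by
          rw [← mul_sum, sum_add_distrib]; simp
  rw [hmom, div_le_iff₀ (by positivity)]
  have hSp : 0 ≤ S ^ (2 * r + 2) := by positivity
  calc _ ≤ C * (2 ^ r * (2 ^ n * (slope2 x 0 0 ^ 2) ^ (r + 1)
          + 2 ^ n * RJquantity x (2 * r + 2) n)) := (hB n).trans (by gcongr)
    _ ≤ C * (2 ^ r * (2 ^ n * (ϱ n * S ^ (2 * r + 2)) + 2 ^ n * (ϱ n * S ^ (2 * r + 2)))) := by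
        gcongr
        · exact hM.trans (le_mul_of_one_le_left hSp hρ)
        · exact hRJn.trans (by gcongr)
    _ = (C * 2 ^ (r + 1)) * ϱ n * S ^ (2 * r + 2) * 2 ^ n := by ring
    _ ≤ (2 ^ (δ / 2 * n) * 2 ^ (δ / 2 * n)) * S ^ (2 * r + 2) * 2 ^ n := by gcongr
    _ = _ := by
        rw [← Real.rpow_add (by norm_num)]
        ring_nf

theorem rpow_le_interp {y l a b c : ℝ} (hy : 0 ≤ y) (hl : 0 < l) (hb : 0 < b) (hab : a ≤ b)
    (hbc : b ≤ c) : y ^ b ≤ l ^ (b - a) * y ^ a + l ^ (b - c) * y ^ c := by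
  rcases hy.eq_or_lt with rfl | hy
  · rw [Real.zero_rpow hb.ne']
    positivity
  rcases le_total y l with h | h
  · have h1 : y ^ b = y ^ (b - a) * y ^ a := by rw [← Real.rpow_add hy]; ring_nf
    have h2 : y ^ (b - a) ≤ l ^ (b - a) := Real.rpow_le_rpow hy.le h (by linarith)
    rw [h1]
    have : 0 ≤ l ^ (b - c) * y ^ c := by positivity
    have : y ^ (b - a) * y ^ a ≤ l ^ (b - a) * y ^ a := by gcongr
    linarith
  · have h1 : y ^ b = y ^ (b - c) * y ^ c := by rw [← Real.rpow_add hy]; ring_nf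
    have h2 : y ^ (b - c) ≤ l ^ (b - c) := Real.rpow_le_rpow_of_nonpos hl h (by linarith)
    rw [h1]
    have : 0 ≤ l ^ (b - a) * y ^ a := by positivity
    have : y ^ (b - c) * y ^ c ≤ l ^ (b - c) * y ^ c := by gcongr
    linarith

/-- Interpolation of moments with a free threshold `l`; it replaces the Hölder and Jensen inequalities. -/
theorem slopeMoment_interp (x : ℝ → ℝ) (n : ℕ) {l a b c : ℝ} (hl : 0 < l) (hb : 0 < b)
    (hab : a ≤ b) (hbc : b ≤ c) : slopeMoment x b n
      ≤ l ^ (b - a) * slopeMoment x a n + l ^ (b - c) * slopeMoment x c n := by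
  simp only [slopeMoment, mul_div_assoc', ← add_div, mul_sum, ← sum_add_distrib]
  gcongr with k
  exact rpow_le_interp (abs_nonneg _) hl hb hab hbc

theorem slopeMoment_zero (x : ℝ → ℝ) (n : ℕ) : slopeMoment x 0 n = 1 := by
  simp [slopeMoment]

theorem slopeMoment_nonneg (x : ℝ → ℝ) (p : ℝ) (n : ℕ) : 0 ≤ slopeMoment x p n := by
  unfold slopeMoment; positivity

theorem slopeMoment_le (x : ℝ → ℝ) (hRJ : ReverseJensen x)
    (hpos : ∀ᶠ n in atTop, 0 < slopeRms x n) {p : ℝ} (hp : 0 < p) {δ : ℝ} (hδ : 0 < δ) :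
    ∀ᶠ n : ℕ in atTop, slopeMoment x p n ≤ (2 : ℝ) ^ (δ * n) * slopeRms x n ^ p := by
  obtain ⟨r, hr⟩ := exists_nat_ge p
  filter_upwards [hpos, slopeMoment_even_le x hRJ r (half_pos hδ),
    eventually_const_le 2 (half_pos hδ)] with n hS h1 h2
  have h := slopeMoment_interp x n hS hp hp.le (show p ≤ 2 * r + 2 by linarith)
  rw [slopeMoment_zero, sub_zero, mul_one] at h
  have hcast : (2 * (r : ℝ) + 2) = (2 * r + 2 : ℕ) := by push_cast; ring
  have hS' : slopeRms x n ^ (2 * r + 2) = slopeRms x n ^ (2 * (r : ℝ) + 2) := by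
    rw [hcast, Real.rpow_natCast]
  have hone : (1 : ℝ) ≤ 2 ^ (δ / 2 * n) := by linarith
  have hSp : 0 < slopeRms x n ^ p := by positivity
  calc slopeMoment x p n ≤ slopeRms x n ^ p + slopeRms x n ^ (p - (2 * r + 2))
          * ((2 : ℝ) ^ (δ / 2 * n) * slopeRms x n ^ (2 * (r : ℝ) + 2)) :=
        h.trans (by rw [← hS']; gcongr)
    _ = slopeRms x n ^ p + (2 : ℝ) ^ (δ / 2 * n) * slopeRms x n ^ p := by
        rw [mul_left_comm, ← Real.rpow_add hS]; ring_nf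
    _ ≤ 2 * 2 ^ (δ / 2 * n) * slopeRms x n ^ p := by nlinarith
    _ ≤ 2 ^ (δ / 2 * n) * 2 ^ (δ / 2 * n) * slopeRms x n ^ p := by gcongr
    _ = _ := by rw [← Real.rpow_add (by norm_num)]; ring_nf

theorem le_slopeMoment (x : ℝ → ℝ) (hRJ : ReverseJensen x)
    (hpos : ∀ᶠ n in atTop, 0 < slopeRms x n) {p : ℝ} (hp : 0 < p) {δ : ℝ} (hδ : 0 < δ) :
    ∀ᶠ n : ℕ in atTop, slopeRms x n ^ p ≤ (2 : ℝ) ^ (δ * n) * slopeMoment x p n := by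
  rcases le_total 2 p with h2p | hp2
  · -- interpolate between the moments `0` and `p`, at the threshold `S / 2`
    filter_upwards [hpos, eventually_const_le (2 * (1 / 2 : ℝ) ^ (2 - p)) hδ] with n hS hK
    set S := slopeRms x n
    have h := slopeMoment_interp x n (half_pos hS) zero_lt_two zero_le_two h2p
    rw [slopeMoment_zero, sub_zero, mul_one, slopeMoment_two, Real.rpow_two] at h
    have hm := slopeMoment_nonneg x p n
    have h3 : S ^ 2 ≤ 2 * ((S / 2) ^ (2 - p) * slopeMoment x p n) := by
      have : 0 ≤ S ^ 2 := sq_nonneg S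
      change S ^ 2 ≤ _ at h
      nlinarith
    have e1 : (S / 2) ^ (2 - p) = (1 / 2) ^ (2 - p) * S ^ (2 - p) := by
      rw [div_eq_inv_mul, Real.mul_rpow (by norm_num) hS.le, one_div]
    have e2 : S ^ p = S ^ (p - 2) * S ^ 2 := by
      rw [← Real.rpow_two, ← Real.rpow_add hS]; ring_nf
    have e3 : S ^ (p - 2) * S ^ (2 - p) = 1 := by
      rw [← Real.rpow_add hS]; simp
    calc S ^ p ≤ S ^ (p - 2) * (2 * ((S / 2) ^ (2 - p) * slopeMoment x p n)) := by
          rw [e2]; gcongr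
      _ = (S ^ (p - 2) * S ^ (2 - p)) * ((2 * (1 / 2) ^ (2 - p)) * slopeMoment x p n) := by
          rw [e1]; ring
      _ ≤ _ := by rw [e3, one_mul]; gcongr
  · have hδ3 : 0 < δ / 3 := by linarith
    -- interpolate between the moments `p` and `4`, at a threshold `E * S` so high that the fourth
    -- moment contributes at most `S ^ 2 / 2`
    filter_upwards [hpos, slopeMoment_even_le x hRJ 1 hδ3, eventually_const_le 2 hδ3]
      with n hS h4 h2
    set S := slopeRms x n
    set E : ℝ := 2 ^ (δ / 3 * n) with hE
    have hE0 : 0 < E := by positivity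
    have hES : 0 < E * S := by positivity
    have h := slopeMoment_interp x n hES zero_lt_two hp2 (show (2 : ℝ) ≤ 4 by norm_num)
    have hm := slopeMoment_nonneg x p n
    rw [slopeMoment_two] at h
    change S ^ 2 ≤ _ at h
    norm_num at h4
    have h5 : (E * S) ^ ((2 : ℝ) - 4) * slopeMoment x 4 n ≤ S ^ 2 / 2 := by
      have e : (E * S) ^ ((2 : ℝ) - 4) = ((E * S) ^ 2)⁻¹ := by
        rw [show (2 : ℝ) - 4 = -2 by norm_num, Real.rpow_neg hES.le, Real.rpow_two]
      rw [e, inv_mul_le_iff₀ (by positivity)]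
      have : E * S ^ 4 * 2 ≤ E * S ^ 4 * E := by gcongr
      linarith [show (E * S) ^ 2 * (S ^ 2 / 2) = E * S ^ 4 * E / 2 by ring]
    have h6 : S ^ 2 ≤ 2 * ((E * S) ^ (2 - p) * slopeMoment x p n) := by
      have := h.trans (add_le_add le_rfl h5)
      linarith
    have e2 : S ^ p = S ^ (p - 2) * S ^ 2 := by
      rw [← Real.rpow_two, ← Real.rpow_add hS]; ring_nf
    have e3 : S ^ (p - 2) * S ^ (2 - p) = 1 := by
      rw [← Real.rpow_add hS]; simp
    have h7 : E ^ (2 - p) ≤ E ^ 2 := by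
      rw [← Real.rpow_two]
      exact Real.rpow_le_rpow_of_exponent_le (by linarith) (by linarith)
    have hE3 : E * E ^ 2 = 2 ^ (δ * n) := by
      rw [hE, ← Real.rpow_natCast, ← Real.rpow_mul (by norm_num), ← Real.rpow_add (by norm_num)]
      push_cast
      ring_nf
    calc S ^ p ≤ S ^ (p - 2) * (2 * ((E * S) ^ (2 - p) * slopeMoment x p n)) := by
          rw [e2]; gcongr
      _ = (S ^ (p - 2) * S ^ (2 - p)) * (2 * E ^ (2 - p) * slopeMoment x p n) := by
          rw [Real.mul_rpow hE0.le hS.le]; ring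
      _ ≤ E * E ^ 2 * slopeMoment x p n := by rw [e3, one_mul]; gcongr
      _ = _ := by rw [hE3]

/-! ### From moments of slopes to the dyadic variation -/

theorem dyadicVar_eq (x : ℝ → ℝ) (p : ℝ) (n : ℕ) :
    dyadicVar x p n = (2 : ℝ) ^ ((1 - p) * n) * slopeMoment x p n := by
  have h : ∀ k : ℕ, |slope2 x n k| ^ p
      = (2 : ℝ) ^ (p * n) * |x (((k : ℝ) + 1) / 2 ^ n) - x ((k : ℝ) / 2 ^ n)| ^ p := by
    intro k
    rw [slope2, abs_mul, Real.mul_rpow (abs_nonneg _) (abs_nonneg _), abs_of_pos (by positivity),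
      ← Real.rpow_natCast, ← Real.rpow_mul (by norm_num), mul_comm p]
  have e : (2 : ℝ) ^ ((1 - p) * n) * 2 ^ (p * n) = 2 ^ n := by
    rw [← Real.rpow_add (by norm_num), ← Real.rpow_natCast]
    ring_nf
  rw [slopeMoment, sum_congr rfl fun k _ => h k, ← mul_sum, mul_div_assoc, ← mul_assoc, e,
    dyadicVar]
  field_simp

/-- If all `S_n` vanish then all dyadic increments do, and by continuity `x` is constant. -/
theorem exists_slopeRms_pos {x : ℝ → ℝ} (hx : ContinuousOn x (Set.Icc 0 1))
    (hnc : Nonconstant x) : ∃ n, 0 < slopeRms x n := by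
  by_contra! hcon
  have hzero : ∀ n, ∀ k < 2 ^ n, slope2 x n k = 0 := by
    intro n k hk
    have h0 : slopeRms x n = 0 := le_antisymm (hcon n) (slopeRms_nonneg x n)
    have h1 := sum_slope2_sq x n
    rw [h0, zero_pow two_ne_zero, mul_zero,
      sum_eq_zero_iff_of_nonneg fun _ _ => sq_nonneg _] at h1
    simpa using h1 k (mem_range.2 hk)
  have hdy : ∀ n k : ℕ, k ≤ 2 ^ n → x ((k : ℝ) / 2 ^ n) = x 0 := by
    intro n k
    induction k with
    | zero => simp
    | succ k ih =>
      intro hk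
      have h1 := hzero n k (by omega)
      rw [slope2, mul_eq_zero_iff_left (by positivity), sub_eq_zero] at h1
      push_cast
      rw [h1, ih (by omega)]
  have hconst : ∀ t ∈ Set.Icc (0 : ℝ) 1, x t = x 0 := by
    intro t ht
    have hlim : Tendsto (fun n : ℕ => ((⌊t * 2 ^ n⌋₊ : ℕ) : ℝ) / 2 ^ n) atTop (nhds t) :=
      (tendsto_nat_floor_mul_div_atTop ht.1).comp
        (tendsto_pow_atTop_atTop_of_one_lt (one_lt_two : (1 : ℝ) < 2))
    have hle : ∀ n : ℕ, ⌊t * 2 ^ n⌋₊ ≤ 2 ^ n := by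
      intro n
      refine Nat.floor_le_of_le ?_
      push_cast
      exact mul_le_of_le_one_left (by positivity) ht.2
    have hmem : ∀ n : ℕ, ((⌊t * 2 ^ n⌋₊ : ℕ) : ℝ) / 2 ^ n ∈ Set.Icc (0 : ℝ) 1 := by
      intro n
      refine ⟨by positivity, ?_⟩
      rw [div_le_one (by positivity)]
      exact_mod_cast hle n
    have h1 := (hx t ht).tendsto.comp
      (tendsto_nhdsWithin_iff.2 ⟨hlim, Eventually.of_forall hmem⟩)
    refine tendsto_nhds_unique h1 ?_
    refine tendsto_const_nhds.congr fun n => ?_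
    exact (hdy n _ (hle n)).symm
  obtain ⟨s, hs, t, ht, hst⟩ := hnc
  exact hst ((hconst s hs).trans (hconst t ht).symm)

theorem slopeRms_mono (x : ℝ → ℝ) : Monotone (slopeRms x) := fun m n h => by
  unfold slopeRms
  have := sSeq_mono x h
  have := sSeq_nonneg x m
  gcongr

/-- If `s_n = 0`, then `ξ_n = 0` by the convention `log 0 = 0`. -/
theorem two_rpow_xiSeq_mul (x : ℝ → ℝ) {n : ℕ} (hn : n ≠ 0) :
    (2 : ℝ) ^ (xiSeq x n * n) = if sSeq x n = 0 then 1 else sSeq x n := by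
  have : xiSeq x n * n = Real.logb 2 (sSeq x n) := by
    rw [xiSeq, div_mul_cancel₀]
    exact_mod_cast hn
  rw [this]
  split_ifs with h
  · simp [h]
  · exact Real.rpow_logb (by norm_num) (by norm_num) (lt_of_le_of_ne (sSeq_nonneg x n) (Ne.symm h))

/-- `S_n` is comparable to `2^{n ξ_n}`. For affine `x`, where `s_n = 0` throughout, the convention
`log 0 = 0` makes `2^{n ξ_n} = 1`, and `S_n = |x 1 - x 0|` is a positive constant. -/
theorem slopeRms_comparable {x : ℝ → ℝ} (hx : ContinuousOn x (Set.Icc 0 1))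
    (hnc : Nonconstant x) : ∃ K : ℝ, 0 < K ∧ ∀ᶠ n : ℕ in atTop,
      (2 : ℝ) ^ (xiSeq x n * n) ≤ K * slopeRms x n ∧
        slopeRms x n ≤ K * (2 : ℝ) ^ (xiSeq x n * n) := by
  obtain ⟨N, hN⟩ := exists_slopeRms_pos hx hnc
  by_cases hs : ∃ m, 0 < sSeq x m
  · obtain ⟨m, hm⟩ := hs
    refine ⟨1 + |slope2 x 0 0| / sSeq x m, by positivity, ?_⟩
    filter_upwards [eventually_ge_atTop m, eventually_ne_atTop 0] with n hn hn0
    have hmn := sSeq_mono x hn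
    have hsn : 0 < sSeq x n := hm.trans_le hmn
    rw [two_rpow_xiSeq_mul x hn0, if_neg hsn.ne']
    have hle : sSeq x n ≤ slopeRms x n := Real.le_sqrt_of_sq_le (by nlinarith [sq_nonneg (slope2 x 0 0)])
    have hq : 0 ≤ |slope2 x 0 0| / sSeq x m := by positivity
    constructor
    · exact hle.trans (le_mul_of_one_le_left (slopeRms_nonneg x n) (by linarith))
    · have h1 : slopeRms x n ≤ |slope2 x 0 0| + sSeq x n := by
        refine Real.sqrt_le_iff.2 ⟨by positivity, ?_⟩
        nlinarith [sq_abs (slope2 x 0 0), mul_nonneg (abs_nonneg (slope2 x 0 0)) hsn.le]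
      have h2 : |slope2 x 0 0| ≤ |slope2 x 0 0| / sSeq x m * sSeq x n := by
        rw [div_mul_eq_mul_div, le_div_iff₀ hm]
        gcongr
      linarith
  · push Not at hs
    have hs0 : ∀ n, sSeq x n = 0 := fun n => le_antisymm (hs n) (sSeq_nonneg x n)
    have hS : ∀ n, slopeRms x n = slopeRms x N := fun n => by simp [slopeRms, hs0]
    refine ⟨slopeRms x N + (slopeRms x N)⁻¹, by positivity, ?_⟩
    filter_upwards [eventually_ne_atTop 0] with n hn0
    rw [two_rpow_xiSeq_mul x hn0, if_pos (hs0 n), hS n, add_mul, inv_mul_cancel₀ hN.ne']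
    constructor
    · nlinarith
    · have : 0 < (slopeRms x N)⁻¹ := by positivity
      linarith

/-! ### Boundedness of `ξ_n` -/

theorem xiSeq_bddBelow (x : ℝ → ℝ) :
    IsBoundedUnder (· ≥ ·) atTop (xiSeq x) := by
  by_cases hs : ∃ m, 0 < sSeq x m
  · obtain ⟨m, hm⟩ := hs
    refine ⟨-|Real.logb 2 (sSeq x m)|, eventually_map.2 ?_⟩
    filter_upwards [eventually_ge_atTop m, eventually_ge_atTop 1] with n hn hn1
    have hn1' : (1 : ℝ) ≤ n := by exact_mod_cast hn1
    have h1 : Real.logb 2 (sSeq x m) ≤ Real.logb 2 (sSeq x n) :=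
      Real.logb_le_logb_of_le (by norm_num) hm (sSeq_mono x hn)
    change _ ≤ _ / _
    rw [le_div_iff₀ (by linarith)]
    nlinarith [neg_abs_le (Real.logb 2 (sSeq x m)), abs_nonneg (Real.logb 2 (sSeq x m))]
  · push Not at hs
    have hs0 : ∀ n, sSeq x n = 0 := fun n => le_antisymm (hs n) (sSeq_nonneg x n)
    exact ⟨0, eventually_map.2 (Eventually.of_forall fun n => by simp [xiSeq, hs0])⟩

theorem xiSeq_bddAbove {x : ℝ → ℝ} (hx : ContinuousOn x (Set.Icc 0 1)) :
    IsBoundedUnder (· ≤ ·) atTop (xiSeq x) := by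
  obtain ⟨B, hB⟩ := isCompact_Icc.exists_bound_of_continuousOn hx
  simp only [Real.norm_eq_abs] at hB
  have hB0 : 0 ≤ B := (abs_nonneg _).trans (hB 0 (by simp))
  have hθ : ∀ m, ∀ k ∈ range (2 ^ m), fsCoeff x m k ^ 2 ≤ 16 * B ^ 2 * 2 ^ m := by
    intro m k hk
    have hk' : (k : ℝ) + 1 ≤ 2 ^ m := by
      have := mem_range.1 hk
      exact_mod_cast this
    have hp : (0 : ℝ) < 2 ^ m := by positivity
    have hk0 : (0 : ℝ) ≤ k := k.cast_nonneg
    have h1 := hB ((2 * (k : ℝ) + 1) / 2 ^ (m + 1)) ⟨by positivity, by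
      rw [div_le_one (by positivity), pow_succ]; linarith⟩
    have h2 := hB ((k : ℝ) / 2 ^ m) ⟨by positivity, by
      rw [div_le_one (by positivity)]; linarith⟩
    have h3 := hB (((k : ℝ) + 1) / 2 ^ m) ⟨by positivity, by
      rw [div_le_one (by positivity)]; linarith⟩
    have h4 := fsCoeff_sq x m k
    rw [slopeJump, mul_pow] at h4
    rw [abs_le] at h1 h2 h3
    have h5 : (2 * x ((2 * (k : ℝ) + 1) / 2 ^ (m + 1)) - x ((k : ℝ) / 2 ^ m)
        - x (((k : ℝ) + 1) / 2 ^ m)) ^ 2 ≤ (4 * B) ^ 2 :=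
      sq_le_sq' (by linarith) (by linarith)
    have h6 : 2 ^ m * fsCoeff x m k ^ 2 ≤ 2 ^ m * (16 * B ^ 2 * 2 ^ m) := by
      rw [h4]
      calc _ ≤ ((2 : ℝ) ^ m) ^ 2 * (4 * B) ^ 2 := by gcongr
        _ = _ := by ring
    exact le_of_mul_le_mul_left h6 hp
  have hsum : ∀ n, sSeq x n ^ 2 ≤ 16 * B ^ 2 * 4 ^ n := by
    intro n
    rw [sSeq_sq]
    induction n with
    | zero => simp; positivity
    | succ n ih =>
      rw [sum_range_succ]
      have h1 := sum_le_sum (hθ n)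
      rw [sum_const, card_range, nsmul_eq_mul] at h1
      push_cast at h1
      have e : (4 : ℝ) ^ n = 2 ^ n * 2 ^ n := by rw [← mul_pow]; norm_num
      have : 0 ≤ 16 * B ^ 2 * 4 ^ n := by positivity
      rw [pow_succ (4 : ℝ)]
      have e2 : (2 : ℝ) ^ n * (16 * B ^ 2 * 2 ^ n) = 16 * B ^ 2 * 4 ^ n := by rw [e]; ring
      linarith
  have hs : ∀ n, sSeq x n ≤ (4 * B + 1) * 2 ^ n := by
    intro n
    refine abs_le_of_sq_le_sq' ((hsum n).trans ?_) (by positivity) |>.2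
    rw [mul_pow, ← pow_mul, mul_comm n 2, pow_mul, show (2 : ℝ) ^ 2 = 4 by norm_num]
    gcongr
    nlinarith
  have hL : 0 ≤ Real.logb 2 (4 * B + 1) := Real.logb_nonneg (by norm_num) (by linarith)
  refine ⟨Real.logb 2 (4 * B + 1) + 1, eventually_map.2 ?_⟩
  filter_upwards [eventually_ge_atTop 1] with n hn1
  have hn1' : (1 : ℝ) ≤ n := by exact_mod_cast hn1
  rw [xiSeq, div_le_iff₀ (by linarith)]
  rcases (sSeq_nonneg x n).eq_or_lt with h | h
  · rw [← h, Real.logb_zero]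
    positivity
  · have h1 := Real.logb_le_logb_of_le (b := 2) (by norm_num) h (hs n)
    rw [Real.logb_mul (by positivity) (by positivity), Real.logb_pow, Real.logb_self_eq_one (by norm_num)] at h1
    nlinarith

/-! ### Growth of the dyadic variation -/

/-- The dyadic variation is `2^{n (1 - p (1 - ξ_n)) + o(n)}`. -/
theorem dyadicVar_bounds {x : ℝ → ℝ} (hx : ContinuousOn x (Set.Icc 0 1)) (hnc : Nonconstant x)
    (hRJ : ReverseJensen x) {p : ℝ} (hp : 0 < p) {δ : ℝ} (hδ : 0 < δ) :
    ∀ᶠ n : ℕ in atTop, (2 : ℝ) ^ ((1 - p * (1 - xiSeq x n) - δ) * n) ≤ dyadicVar x p n ∧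
      dyadicVar x p n ≤ (2 : ℝ) ^ ((1 - p * (1 - xiSeq x n) + δ) * n) := by
  obtain ⟨N, hN⟩ := exists_slopeRms_pos hx hnc
  have hpos : ∀ᶠ n in atTop, 0 < slopeRms x n :=
    (eventually_ge_atTop N).mono fun n hn => hN.trans_le (slopeRms_mono x hn)
  obtain ⟨K, hK, hcomp⟩ := slopeRms_comparable hx hnc
  filter_upwards [hpos, hcomp, slopeMoment_le x hRJ hpos hp (half_pos hδ),
    le_slopeMoment x hRJ hpos hp (half_pos hδ), eventually_const_le (K ^ p) (half_pos hδ)]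
    with n hS hc hup hlow hKn
  set u : ℝ := 2 ^ (xiSeq x n * n) with hu
  have hu0 : 0 < u := by positivity
  have hup' : u ^ p = 2 ^ (p * xiSeq x n * n) := by
    rw [hu, ← Real.rpow_mul (by norm_num)]; ring_nf
  have h1 : u ^ p ≤ K ^ p * slopeRms x n ^ p := by
    rw [← Real.mul_rpow hK.le hS.le]; exact Real.rpow_le_rpow hu0.le hc.1 hp.le
  have h2 : slopeRms x n ^ p ≤ K ^ p * u ^ p := by
    rw [← Real.mul_rpow hK.le hu0.le]; exact Real.rpow_le_rpow hS.le hc.2 hp.le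
  have hm := slopeMoment_nonneg x p n
  have hδδ : (2 : ℝ) ^ (δ / 2 * n) * 2 ^ (δ / 2 * n) = 2 ^ (δ * n) := by
    rw [← Real.rpow_add (by norm_num)]; ring_nf
  have hlow' : u ^ p ≤ 2 ^ (δ * n) * slopeMoment x p n := by
    rw [← hδδ, mul_assoc]
    exact h1.trans (by gcongr)
  have hupp : slopeMoment x p n ≤ 2 ^ (δ * n) * u ^ p := by
    rw [← hδδ, mul_assoc]
    refine hup.trans ?_
    gcongr
    exact h2.trans (by gcongr)
  rw [dyadicVar_eq]
  constructor
  · have e : (2 : ℝ) ^ ((1 - p * (1 - xiSeq x n) - δ) * n)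
        = 2 ^ ((1 - p) * n) * (2 ^ (-(δ * n)) * u ^ p) := by
      rw [hup', ← Real.rpow_add (by norm_num), ← Real.rpow_add (by norm_num)]; ring_nf
    rw [e, Real.rpow_neg (by norm_num)]
    gcongr
    rwa [inv_mul_le_iff₀ (by positivity)]
  · have e : (2 : ℝ) ^ ((1 - p * (1 - xiSeq x n) + δ) * n)
        = 2 ^ ((1 - p) * n) * (2 ^ (δ * n) * u ^ p) := by
      rw [hup', ← Real.rpow_add (by norm_num), ← Real.rpow_add (by norm_num)]; ring_nf
    rw [e]
    gcongr

/-- Above the critical exponent of `ξ`, the variation is arbitrarily small wherever `ξ_n` is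
close to or below `ξ`. -/
theorem dyadicVar_small {x : ℝ → ℝ} (hx : ContinuousOn x (Set.Icc 0 1)) (hnc : Nonconstant x)
    (hRJ : ReverseJensen x) {ξ p : ℝ} (hξ : ξ < 1) (hp : 1 / (1 - ξ) < p) :
    ∃ ξ' > ξ, ∀ ε > 0, ∀ᶠ n in atTop, xiSeq x n < ξ' → dyadicVar x p n < ε := by
  have h1 : 0 < 1 - ξ := by linarith
  have hp0 : 0 < p := (one_div_pos.2 h1).trans hp
  have h2 : 1 < p * (1 - ξ) := by rwa [div_lt_iff₀ h1] at hp
  set δ : ℝ := (p * (1 - ξ) - 1) / 3 with hδ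
  have hδ0 : 0 < δ := by rw [hδ]; linarith
  refine ⟨ξ + δ / p, by have : 0 < δ / p := by positivity
                        linarith, fun ε hε => ?_⟩
  filter_upwards [dyadicVar_bounds hx hnc hRJ hp0 hδ0, eventually_const_le (1 / ε + 1) hδ0]
    with n hb hn hxi
  have h3 : p * xiSeq x n ≤ p * ξ + δ := by
    have := mul_le_mul_of_nonneg_left hxi.le hp0.le
    rwa [mul_add, mul_div_cancel₀ _ hp0.ne'] at this
  have h4 : (2 : ℝ) ^ ((1 - p * (1 - xiSeq x n) + δ) * n) ≤ 2 ^ (-(δ * n)) := by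
    refine Real.rpow_le_rpow_of_exponent_le (by norm_num) ?_
    rw [← neg_mul]
    gcongr
    linarith
  have h5 : (2 : ℝ) ^ (-(δ * n)) < ε := by
    rw [Real.rpow_neg (by norm_num), inv_lt_comm₀ (by positivity) hε, ← one_div]
    linarith
  linarith [hb.2]

/-- Below the critical exponent of `ξ`, the variation is arbitrarily large wherever `ξ_n` is
close to or above `ξ`. -/
theorem dyadicVar_large {x : ℝ → ℝ} (hx : ContinuousOn x (Set.Icc 0 1)) (hnc : Nonconstant x)
    (hRJ : ReverseJensen x) {ξ p : ℝ} (hξ : ξ < 1) (hp0 : 0 < p) (hp : p < 1 / (1 - ξ)) :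
    ∃ ξ' < ξ, ∀ A : ℝ, ∀ᶠ n in atTop, ξ' < xiSeq x n → A ≤ dyadicVar x p n := by
  have h1 : 0 < 1 - ξ := by linarith
  have h2 : p * (1 - ξ) < 1 := by rwa [lt_div_iff₀ h1] at hp
  set δ : ℝ := (1 - p * (1 - ξ)) / 3 with hδ
  have hδ0 : 0 < δ := by rw [hδ]; linarith
  refine ⟨ξ - δ / p, by have : 0 < δ / p := by positivity
                        linarith, fun A => ?_⟩
  filter_upwards [dyadicVar_bounds hx hnc hRJ hp0 hδ0, eventually_const_le A hδ0]
    with n hb hn hxi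
  have h3 : p * ξ - δ ≤ p * xiSeq x n := by
    have := mul_le_mul_of_nonneg_left hxi.le hp0.le
    rwa [mul_sub, mul_div_cancel₀ _ hp0.ne'] at this
  refine hn.trans (le_trans ?_ hb.1)
  refine Real.rpow_le_rpow_of_exponent_le (by norm_num) ?_
  gcongr
  linarith

theorem stmt3 (x : ℝ → ℝ) (hx : ContinuousOn x (Set.Icc 0 1)) (hnc : Nonconstant x)
    (hRJ : ReverseJensen x) (ξp ξm : ℝ)
    (hp : limsup (xiSeq x) atTop = ξp) (hm : liminf (xiSeq x) atTop = ξm)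
    (hp1 : ξp < 1) (hm1 : ξm < 1) :
    (∀ p : ℝ, 1 / (1 - ξp) < p →
        limsup (fun n => ((dyadicVar x p n : ℝ) : EReal)) atTop = 0) ∧
    (∀ p : ℝ, 0 < p → p < 1 / (1 - ξp) →
        limsup (fun n => ((dyadicVar x p n : ℝ) : EReal)) atTop = ⊤) ∧
    (∀ p : ℝ, 1 / (1 - ξm) < p →
        liminf (fun n => ((dyadicVar x p n : ℝ) : EReal)) atTop = 0) ∧
    (∀ p : ℝ, 0 < p → p < 1 / (1 - ξm) →
        liminf (fun n => ((dyadicVar x p n : ℝ) : EReal)) atTop = ⊤) := by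
  have hbb := xiSeq_bddBelow x
  have hba := xiSeq_bddAbove hx
  have hnn : ∀ p, ∀ᶠ n in atTop, (0 : EReal) ≤ ((dyadicVar x p n : ℝ) : EReal) := fun p =>
    Eventually.of_forall fun n => EReal.coe_nonneg.2 (dyadicVar_nonneg x p n)
  refine ⟨fun p hpp => ?_, fun p hp0 hpp => ?_, fun p hpp => ?_, fun p hp0 hpp => ?_⟩
  · obtain ⟨ξ', hξ', h⟩ := dyadicVar_small hx hnc hRJ hp1 hpp
    have hev : ∀ᶠ n in atTop, xiSeq x n < ξ' :=
      eventually_lt_of_limsup_lt (by rwa [hp]) hba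
    have hT : Tendsto (dyadicVar x p) atTop (nhds 0) := by
      refine tendsto_order.2 ⟨fun a ha => ?_, fun a ha => ?_⟩
      · exact Eventually.of_forall fun n => ha.trans_le (dyadicVar_nonneg x p n)
      · filter_upwards [hev, h a ha] with n h1 h2 using h2 h1
    exact (EReal.tendsto_coe.2 hT).limsup_eq
  · obtain ⟨ξ', hξ', h⟩ := dyadicVar_large hx hnc hRJ hp1 hp0 hpp
    have hfr : ∃ᶠ n in atTop, ξ' < xiSeq x n :=
      frequently_lt_of_lt_limsup hbb.isCoboundedUnder_le (by rwa [hp])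
    refine EReal.eq_top_iff_forall_lt _ |>.2 fun A => ?_
    refine lt_of_lt_of_le (EReal.coe_lt_coe_iff.2 (lt_add_one A)) ?_
    refine le_limsup_of_frequently_le' ?_
    exact (hfr.and_eventually (h (A + 1))).mono fun n hn => EReal.coe_le_coe_iff.2 (hn.2 hn.1)
  · obtain ⟨ξ', hξ', h⟩ := dyadicVar_small hx hnc hRJ hm1 hpp
    have hfr : ∃ᶠ n in atTop, xiSeq x n < ξ' :=
      frequently_lt_of_liminf_lt hba.isCoboundedUnder_ge (by rwa [hm])
    refine le_antisymm ?_ (le_liminf_of_le (by isBoundedDefault) (hnn p))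
    refine EReal.le_of_forall_lt_iff_le.1 fun a ha => ?_
    refine liminf_le_of_frequently_le' ?_
    exact (hfr.and_eventually (h a (by exact_mod_cast ha))).mono
      fun n hn => EReal.coe_le_coe_iff.2 (hn.2 hn.1).le
  · obtain ⟨ξ', hξ', h⟩ := dyadicVar_large hx hnc hRJ hm1 hp0 hpp
    have hev : ∀ᶠ n in atTop, ξ' < xiSeq x n :=
      eventually_lt_of_lt_liminf (by rwa [hm]) hbb
    refine EReal.eq_top_iff_forall_lt _ |>.2 fun A => ?_
    refine lt_of_lt_of_le (EReal.coe_lt_coe_iff.2 (lt_add_one A)) ?_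
    refine le_liminf_of_le (by isBoundedDefault) ?_
    filter_upwards [hev, h (A + 1)] with n h1 h2 using EReal.coe_le_coe_iff.2 (h2 h1)
end
end

section
/- Let x : [0,1] → ℝ be a continuous function with Faber–Schauder coefficients θ_{m,k}. If x has bounded variation on [0,1], then sup_{n∈ℕ} 2^{−n/2} Σ_{k=0}^{2^n−1} |θ_{n,k}| < ∞. -/
/-!
The factor `2^(-n/2)` cancels the normalisation of `θ_{n,k}`, and the remaining second difference is
a difference of two consecutive increments of `x` along the grid `i / 2^(n+1)`. By the triangle
inequality the whole expression is at most the sum of the absolute increments of `x` along this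
grid (`sum_abs_grid_le`), hence at most the total variation of `x` on `[0,1]`, uniformly in `n`.
-/

open Filter Finset

noncomputable section

theorem sum_range_two_mul_pairs (a : ℕ → ℝ) (N : ℕ) :
    ∑ k ∈ Finset.range N, (a (2 * k) + a (2 * k + 1)) = ∑ i ∈ Finset.range (2 * N), a i := by
  induction N with
  | zero => simp
  | succ N ih =>
    rw [Finset.sum_range_succ, ih, show 2 * (N + 1) = 2 * N + 1 + 1 by ring,
      Finset.sum_range_succ, Finset.sum_range_succ, add_assoc]

/-- The increments along the uniform grid of mesh `1 / N` are controlled by the total variation. -/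
theorem sum_abs_grid_le (x : ℝ → ℝ) (hbv : BoundedVariationOn x (Set.Icc 0 1)) (N : ℕ)
    (hN : 0 < N) :
    ∑ i ∈ Finset.range N, |x (((i + 1 : ℕ) : ℝ) / N) - x ((i : ℝ) / N)|
      ≤ (eVariationOn x (Set.Icc 0 1)).toReal := by
  have hN' : (0 : ℝ) < N := by exact_mod_cast hN
  have h := eVariationOn.sum_le_of_monotoneOn_Iic (f := x) (s := Set.Icc (0 : ℝ) 1) (n := N)
    (u := fun i : ℕ => (i : ℝ) / N)
    (fun i _ j _ hij => by
      have : (i : ℝ) ≤ j := by exact_mod_cast hij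
      dsimp only
      gcongr)
    (fun i hi => ⟨by positivity, by
      rw [div_le_one hN']
      exact_mod_cast hi⟩)
  have h' := ENNReal.toReal_mono hbv h
  rw [ENNReal.toReal_sum (fun _ _ => edist_ne_top _ _)] at h'
  simpa only [edist_dist, Real.dist_eq, ENNReal.toReal_ofReal (abs_nonneg _)] using h'

theorem stmt10 (x : ℝ → ℝ) (hx : ContinuousOn x (Set.Icc 0 1))
    (hbv : BoundedVariationOn x (Set.Icc 0 1)) :
    BddAbove (Set.range (fun n : ℕ =>
      (2 : ℝ) ^ (-(n : ℝ) / 2) * ∑ k ∈ Finset.range (2 ^ n), |fsCoeff x n k|)) := by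
  refine ⟨(eVariationOn x (Set.Icc 0 1)).toReal, ?_⟩
  rintro _ ⟨n, rfl⟩
  dsimp only
  rw [Finset.mul_sum]
  refine le_trans ?_ (sum_abs_grid_le x hbv (2 * 2 ^ n) (by positivity))
  rw [← sum_range_two_mul_pairs
    (fun i => |x (((i + 1 : ℕ) : ℝ) / (2 * 2 ^ n : ℕ)) - x ((i : ℝ) / (2 * 2 ^ n : ℕ))|)]
  refine Finset.sum_le_sum fun k _ => ?_
  have hpow : (2 : ℝ) ^ (-(n : ℝ) / 2) * 2 ^ ((n : ℝ) / 2) = 1 := by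
    rw [← Real.rpow_add two_pos, neg_div, neg_add_cancel, Real.rpow_zero]
  -- The three nodes of `θ_{n,k}` are the points `2k`, `2k+1`, `2k+2` of the grid of mesh `2^(-n-1)`.
  have e0 : ((2 * k : ℕ) : ℝ) / (2 * 2 ^ n : ℕ) = (k : ℝ) / 2 ^ n := by
    push_cast
    field_simp
  have e1 : ((2 * k + 1 : ℕ) : ℝ) / (2 * 2 ^ n : ℕ) = (2 * (k : ℝ) + 1) / 2 ^ (n + 1) := by
    push_cast
    rw [pow_succ']
  have e2 : ((2 * k + 1 + 1 : ℕ) : ℝ) / (2 * 2 ^ n : ℕ) = ((k : ℝ) + 1) / 2 ^ n := by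
    push_cast
    field_simp
    ring
  rw [e0, e1, e2, fsCoeff, abs_mul, abs_of_pos (Real.rpow_pos_of_pos two_pos _), ← mul_assoc, hpow,
    one_mul]
  generalize x ((2 * (k : ℝ) + 1) / 2 ^ (n + 1)) = b
  generalize x ((k : ℝ) / 2 ^ n) = a
  generalize x (((k : ℝ) + 1) / 2 ^ n) = c
  calc |2 * b - a - c| = |(b - a) - (c - b)| := by ring_nf
    _ ≤ |b - a| + |c - b| := abs_sub _ _
end
end

section
/- Let n ∈ ℕ, let 0 ≤ m ≤ n − 1 and 0 ≤ k ≤ 2^m − 1, and let t = Σ_{j=1}^{n} 2^{−j} a_j with a_j ∈ {0,1} for each j. Then e_{m,k}(t + 2^{−n}) − e_{m,k}(t) = 2^{m/2−n}(1 − 2a_{m+1}) if ⌊2^m t⌋ = k, and e_{m,k}(t + 2^{−n}) − e_{m,k}(t) = 0 otherwise. -/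
/-!
Multiplying `t` by `2 ^ m` shifts the binary point, so `2 ^ m * t = N + a (m + 1) / 2 + r` with `N`
an integer and `r` the contribution of the digits past position `m + 1`. Since `r` is a multiple of
`δ = 2 ^ m / 2 ^ n` that is smaller than `1 / 2`, even `r + δ ≤ 1 / 2` (`exists_dyadic_split`).
Hence `2 ^ m * t` and `2 ^ m * t + δ` lie in the same closed half of the interval `[N, N + 1]`.
Since `e00 (· - k)` vanishes on `[N, N + 1]` when `N ≠ k`, and has slope `1` on the left half and
`-1` on the right half when `N = k`, the increment can be read off (`e00_increment`); the prefactor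
`2 ^ (-m / 2)` turns `δ` into `2 ^ (m / 2 - n)`.
-/

open Filter Finset

noncomputable section

/-- The basic Faber–Schauder function `e_{0,0}(t) = (min(t, 1-t))⁺`. -/
def e00 (t : ℝ) : ℝ := max (min t (1 - t)) 0

/-- The Faber–Schauder functions `e_{m,k}(t) = 2^{-m/2} e_{0,0}(2^m t - k)`. -/
def eFS (m : ℕ) (k : ℤ) (t : ℝ) : ℝ := 2 ^ (-(m : ℝ) / 2) * e00 (2 ^ m * t - k)

lemma exists_nat_dyadic_head (a : ℕ → ℕ) (m : ℕ) :
    ∃ N : ℕ, (2 : ℝ) ^ m * ∑ j ∈ Finset.Icc 1 m, (a j : ℝ) / 2 ^ j = N := by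
  induction m with
  | zero => exact ⟨0, by simp⟩
  | succ m ih =>
    obtain ⟨N, hN⟩ := ih
    refine ⟨2 * N + a (m + 1), ?_⟩
    rw [Finset.sum_Icc_succ_top (by omega)]
    push_cast
    rw [← hN]
    field_simp
    ring

/-- Splits `2 ^ m * t` into an integer, the contribution of the digit `a (m + 1)`, and a remainder
that stays at least one step `2 ^ m / 2 ^ n` below `1 / 2`. -/
lemma exists_dyadic_split (a : ℕ → ℕ) (m n : ℕ) (hmn : m + 1 ≤ n)
    (ha : ∀ j : ℕ, 1 ≤ j → j ≤ n → a j = 0 ∨ a j = 1) :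
    ∃ (N : ℕ) (r : ℝ), (2 : ℝ) ^ m * ∑ j ∈ Finset.Icc 1 n, (a j : ℝ) / 2 ^ j
        = N + a (m + 1) / 2 + r ∧ 0 ≤ r ∧ r + 2 ^ m / 2 ^ n ≤ 1 / 2 := by
  induction n, hmn using Nat.le_induction with
  | base =>
    obtain ⟨N, hN⟩ := exists_nat_dyadic_head a m
    refine ⟨N, 0, ?_, le_rfl, ?_⟩
    · rw [Finset.sum_Icc_succ_top (by omega), mul_add, hN]
      field_simp
      ring
    · apply le_of_eq
      field_simp
      ring
  | succ n hmn ih =>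
    obtain ⟨N, r, h, hr, hr'⟩ := ih fun j h1 h2 => ha j h1 (by omega)
    have hstep : (2 : ℝ) ^ m / 2 ^ n = 2 * (2 ^ m / 2 ^ (n + 1)) := by
      field_simp
      ring
    have hpos : (0 : ℝ) < 2 ^ m / 2 ^ (n + 1) := by positivity
    refine ⟨N, r + a (n + 1) * (2 ^ m / 2 ^ (n + 1)), ?_, by positivity, ?_⟩
    · rw [Finset.sum_Icc_succ_top (by omega), mul_add, h]
      ring
    · rcases ha (n + 1) (by omega) le_rfl with h0 | h0 <;> rw [h0] <;> push_cast <;> linarith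

lemma e00_of_le {x : ℝ} (h : x ≤ 0) : e00 x = 0 :=
  max_eq_right ((min_le_left _ _).trans h)

lemma e00_of_ge {x : ℝ} (h : 1 ≤ x) : e00 x = 0 :=
  max_eq_right ((min_le_right _ _).trans (by linarith))

lemma e00_left {x : ℝ} (h : 0 ≤ x) (h' : x ≤ 1 / 2) : e00 x = x := by
  rw [e00, min_eq_left (by linarith), max_eq_left h]

lemma e00_right {x : ℝ} (h : 1 / 2 ≤ x) (h' : x ≤ 1) : e00 x = 1 - x := by
  rw [e00, min_eq_right (by linarith), max_eq_left (by linarith)]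

/-- Increment of the tent function over a step that stays in one half of `[N, N + 1]`, shifted
by `k`. -/
lemma e00_increment (N k b : ℕ) (hb : b = 0 ∨ b = 1) (r δ : ℝ) (hr : 0 ≤ r) (hδ : 0 < δ)
    (hrδ : r + δ ≤ 1 / 2) :
    e00 (N + b / 2 + r + δ - k) - e00 (N + b / 2 + r - k)
      = if N = k then δ * (1 - 2 * (b : ℝ)) else 0 := by
  have hb0 : (0 : ℝ) ≤ b := by positivity
  have hb1 : (b : ℝ) ≤ 1 := by rcases hb with rfl | rfl <;> simp
  split_ifs with h
  · subst h
    rcases hb with rfl | rfl <;> push_cast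
    · rw [e00_left (by linarith) (by linarith), e00_left (by linarith) (by linarith)]
      ring
    · rw [e00_right (by linarith) (by linarith), e00_right (by linarith) (by linarith)]
      ring
  · rcases lt_or_gt_of_ne h with h | h
    · have h' : (N : ℝ) + 1 ≤ k := by exact_mod_cast h
      rw [e00_of_le (by linarith), e00_of_le (by linarith), sub_zero]
    · have h' : (k : ℝ) + 1 ≤ N := by exact_mod_cast h
      rw [e00_of_ge (by linarith), e00_of_ge (by linarith), sub_zero]

theorem stmt15 (n : ℕ) (hn : 1 ≤ n) (m k : ℕ) (hm : m ≤ n - 1) (hk : k ≤ 2 ^ m - 1)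
    (a : ℕ → ℕ) (ha : ∀ j : ℕ, 1 ≤ j → j ≤ n → a j = 0 ∨ a j = 1)
    (t : ℝ) (ht : t = ∑ j ∈ Finset.Icc 1 n, (a j : ℝ) / 2 ^ j) :
    eFS m (k : ℤ) (t + 1 / 2 ^ n) - eFS m (k : ℤ) t =
      if ⌊(2 : ℝ) ^ m * t⌋ = (k : ℤ) then
        2 ^ ((m : ℝ) / 2 - (n : ℝ)) * (1 - 2 * (a (m + 1) : ℝ))
      else 0 := by
  obtain ⟨N, r, h, hr, hrδ⟩ := exists_dyadic_split a m n (by omega) ha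
  have hδ : (0 : ℝ) < 2 ^ m / 2 ^ n := by positivity
  have hb := ha (m + 1) (by omega) (by omega)
  have hb0 : (0 : ℝ) ≤ a (m + 1) := by positivity
  have hb1 : (a (m + 1) : ℝ) ≤ 1 := by rcases hb with hb | hb <;> simp [hb]
  rw [← ht] at h
  have hfl : ⌊(2 : ℝ) ^ m * t⌋ = (N : ℤ) := by
    rw [Int.floor_eq_iff, h]
    push_cast
    constructor <;> linarith
  have hpow : (2 : ℝ) ^ (-(m : ℝ) / 2) * (2 ^ m / 2 ^ n) = 2 ^ ((m : ℝ) / 2 - (n : ℝ)) := by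
    rw [← Real.rpow_natCast, ← Real.rpow_natCast, ← Real.rpow_sub two_pos,
      ← Real.rpow_add two_pos]
    congr 1
    ring
  have hshift : (2 : ℝ) ^ m * (t + 1 / 2 ^ n) = N + a (m + 1) / 2 + r + 2 ^ m / 2 ^ n := by
    rw [mul_add, h]
    ring
  have key := e00_increment N k (a (m + 1)) hb r _ hr hδ hrδ
  simp only [eFS, hfl, Int.cast_natCast, Nat.cast_inj]
  rw [hshift, h, ← mul_sub, key]
  split_ifs
  · rw [← hpow]
    ring
  · simp
end
end

section
/- Fix m ∈ ℕ and α_0, …, α_m ≥ 0 with α_0 > 0, and let n > m + 1. Let x : [0,1] → ℝ be a continuous function with s_{n−m−1}(x) > 0. Then the function λ ↦ Σ_{k=n−m}^{n} α_{n−k}(Ĥ_k(λx) − Ĥ_{k−1}(λx))² has a unique minimizer λ^s_n > 0, and the sequential scale estimate H^s_n(x) := Ĥ_n(λ^s_n x) satisfies H^s_n(x) = Σ_{k=n−m−1}^{n} β_{n,k} Ĥ_k(x), where, with c^s_n := Σ_{k=n−m}^{n} α_{n−k}/(k²(k−1)²), the coefficients are β_{n,n} = 1 + α_0/(c^s_n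 n²(n−1)), β_{n,k} = (1/(c^s_n n k))(α_{n−k}/(k−1) − α_{n−k−1}/(k+1)) for n − m ≤ k ≤ n − 1, and β_{n,n−m−1} = −α_m/(c^s_n n (n−m)(n−m−1)). -/
/-!
Scaling `x` by `μ > 0` multiplies every `s_k` by `μ`, so `Ĥ_k(μx) = Ĥ_k(x) - L / k` with
`L = log₂ μ` (`Hhat_smul`). Hence the increment `Ĥ_k - Ĥ_{k-1}` changes by `L / (k(k-1))`, and the
objective is a quadratic polynomial in `L` with leading coefficient `c^s_n > 0`. Completing the
square (`sum_sq_affine`) shows that it is minimal exactly at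
`L₀ = -(1 / c^s_n) ∑ α_{n-k} (Ĥ_k(x) - Ĥ_{k-1}(x)) / (k(k-1))`.
Inserting `L₀` into `Ĥ_n(λx) = Ĥ_n(x) - L₀ / n` and summing by parts (`sum_mul_sub_pred`) yields
the coefficients `β_{n,k}`.
-/

open Filter Finset

noncomputable section

/-- The Gladyshev estimate `Ĥ_n(x) = 1 - (1/n) log₂ s_n(x)`. -/
def Hhat (x : ℝ → ℝ) (n : ℕ) : ℝ := 1 - Real.logb 2 (sSeq x n) / n

/-- The objective function for the sequential scaling factor:
`λ ↦ ∑_{k=n-m}^n α_{n-k} (Ĥ_k(λx) - Ĥ_{k-1}(λx))²`. -/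
def seqObj (m : ℕ) (α : ℕ → ℝ) (n : ℕ) (x : ℝ → ℝ) (lam : ℝ) : ℝ :=
  ∑ k ∈ Finset.Icc (n - m) n,
    α (n - k) * (Hhat (fun t => lam * x t) k - Hhat (fun t => lam * x t) (k - 1)) ^ 2

/-- `c^s_n = ∑_{k=n-m}^n α_{n-k} / (k²(k-1)²)`. -/
def csn (m : ℕ) (α : ℕ → ℝ) (n : ℕ) : ℝ :=
  ∑ k ∈ Finset.Icc (n - m) n, α (n - k) / ((k : ℝ) ^ 2 * ((k : ℝ) - 1) ^ 2)

theorem sSeq_smul (x : ℝ → ℝ) (μ : ℝ) (hμ : 0 < μ) (n : ℕ) :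
    sSeq (fun t => μ * x t) n = μ * sSeq x n := by
  have h : ∀ m k, fsCoeff (fun t => μ * x t) m k ^ 2 = μ ^ 2 * fsCoeff x m k ^ 2 := by
    intro m k
    simp only [fsCoeff]
    ring
  simp only [sSeq, h, ← Finset.mul_sum]
  rw [Real.sqrt_mul (sq_nonneg μ), Real.sqrt_sq hμ.le]

theorem Hhat_smul (x : ℝ → ℝ) (μ : ℝ) (hμ : 0 < μ) (k : ℕ) (hk : 0 < sSeq x k) :
    Hhat (fun t => μ * x t) k = Hhat x k - Real.logb 2 μ / k := by
  simp only [Hhat, sSeq_smul x μ hμ]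
  rw [Real.logb_mul hμ.ne' hk.ne']
  ring

/-- Completing the square in a weighted sum of squares of affine functions of `L`. -/
theorem sum_sq_affine (S : Finset ℕ) (a d e : ℕ → ℝ) (c L : ℝ)
    (hc : c = ∑ k ∈ S, a k * e k ^ 2) (hc0 : c ≠ 0) :
    ∑ k ∈ S, a k * (d k + L * e k) ^ 2 =
      c * (L - -(∑ k ∈ S, a k * e k * d k) / c) ^ 2 +
        (∑ k ∈ S, a k * d k ^ 2 - (∑ k ∈ S, a k * e k * d k) ^ 2 / c) := by
  have h : ∑ k ∈ S, a k * (d k + L * e k) ^ 2 =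
      L ^ 2 * c + 2 * L * (∑ k ∈ S, a k * e k * d k) + ∑ k ∈ S, a k * d k ^ 2 := by
    rw [hc, Finset.mul_sum, Finset.mul_sum, ← Finset.sum_add_distrib, ← Finset.sum_add_distrib]
    exact Finset.sum_congr rfl fun k _ => by ring
  rw [h]
  field_simp
  ring

/-- Summation by parts over `a ≤ k ≤ n`. -/
theorem sum_mul_sub_pred (w H : ℕ → ℝ) (a n : ℕ) (han : a ≤ n) :
    ∑ k ∈ Finset.Icc a n, w k * (H k - H (k - 1)) =
      w n * H n + ∑ k ∈ Finset.Ico a n, (w k - w (k + 1)) * H k - w a * H (a - 1) := by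
  induction n, han using Nat.le_induction with
  | base => simp; ring
  | succ n hn ih =>
    rw [Finset.sum_Icc_succ_top (by omega), ih, Finset.sum_Ico_succ_top hn, Nat.add_sub_cancel]
    ring

/-- The objective is a quadratic polynomial in `log₂ μ` with leading coefficient `c^s_n`,
written in vertex form. -/
theorem seqObj_eq (m : ℕ) (α : ℕ → ℝ) (n : ℕ) (hn : m + 1 < n) (x : ℝ → ℝ)
    (hs : 0 < sSeq x (n - m - 1)) (hc : csn m α n ≠ 0) :
    ∃ C : ℝ, ∀ μ : ℝ, 0 < μ → seqObj m α n x μ =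
      csn m α n * (Real.logb 2 μ -
        -(∑ k ∈ Finset.Icc (n - m) n,
          α (n - k) / ((k : ℝ) * ((k : ℝ) - 1)) * (Hhat x k - Hhat x (k - 1))) / csn m α n) ^ 2
        + C := by
  have hc' : csn m α n =
      ∑ k ∈ Finset.Icc (n - m) n, α (n - k) * (1 / ((k : ℝ) * ((k : ℝ) - 1))) ^ 2 := by
    unfold csn
    exact Finset.sum_congr rfl fun k _ => by rw [one_div, inv_pow, mul_pow, div_eq_mul_inv]
  refine ⟨∑ k ∈ Finset.Icc (n - m) n, α (n - k) * (Hhat x k - Hhat x (k - 1)) ^ 2 -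
    (∑ k ∈ Finset.Icc (n - m) n,
      α (n - k) / ((k : ℝ) * ((k : ℝ) - 1)) * (Hhat x k - Hhat x (k - 1))) ^ 2 / csn m α n,
    fun μ hμ => ?_⟩
  have key := sum_sq_affine (Finset.Icc (n - m) n) (fun k => α (n - k))
    (fun k => Hhat x k - Hhat x (k - 1)) (fun k => 1 / ((k : ℝ) * ((k : ℝ) - 1)))
    (csn m α n) (Real.logb 2 μ) hc' hc
  simp only [mul_one_div] at key
  rw [← key]
  unfold seqObj
  refine Finset.sum_congr rfl fun k hk => ?_
  obtain ⟨hk1, hk2⟩ := Finset.mem_Icc.mp hk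
  rw [Hhat_smul x μ hμ k (hs.trans_le (sSeq_mono x (by omega))),
    Hhat_smul x μ hμ (k - 1) (hs.trans_le (sSeq_mono x (by omega))), Nat.cast_pred (by omega)]
  have h2 : (2 : ℝ) ≤ k := by exact_mod_cast (by omega : 2 ≤ k)
  have h0 : (k : ℝ) ≠ 0 := by linarith
  have h1 : (k : ℝ) - 1 ≠ 0 := by linarith
  congr 2
  field_simp
  ring

theorem csn_pos (m : ℕ) (α : ℕ → ℝ) (hα : ∀ k : ℕ, k ≤ m → 0 ≤ α k) (hα0 : 0 < α 0)
    (n : ℕ) (hn : m + 1 < n) : 0 < csn m α n := by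
  apply Finset.sum_pos'
  · intro k hk
    obtain ⟨hk1, hk2⟩ := Finset.mem_Icc.mp hk
    have := hα (n - k) (by omega)
    positivity
  · refine ⟨n, Finset.mem_Icc.mpr ⟨by omega, le_rfl⟩, ?_⟩
    have h2 : (2 : ℝ) ≤ n := by exact_mod_cast (by omega : 2 ≤ n)
    have h1 : (0 : ℝ) < (n : ℝ) - 1 := by linarith
    rw [Nat.sub_self]
    positivity

theorem stmt17 (m : ℕ) (α : ℕ → ℝ) (hα : ∀ k : ℕ, k ≤ m → 0 ≤ α k) (hα0 : 0 < α 0)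
    (n : ℕ) (hn : m + 1 < n)
    (x : ℝ → ℝ) (hx : ContinuousOn x (Set.Icc 0 1))
    (hs : 0 < sSeq x (n - m - 1)) :
    (∃! lam : ℝ, 0 < lam ∧ ∀ μ : ℝ, 0 < μ → seqObj m α n x lam ≤ seqObj m α n x μ) ∧
    ∀ lam : ℝ, (0 < lam ∧ ∀ μ : ℝ, 0 < μ → seqObj m α n x lam ≤ seqObj m α n x μ) →
      Hhat (fun t => lam * x t) n =
        (1 + α 0 / (csn m α n * (n : ℝ) ^ 2 * ((n : ℝ) - 1))) * Hhat x n +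
        (∑ k ∈ Finset.Ico (n - m) n,
          (1 / (csn m α n * (n : ℝ) * (k : ℝ))) *
            (α (n - k) / ((k : ℝ) - 1) - α (n - k - 1) / ((k : ℝ) + 1)) * Hhat x k) +
        (-(α m) / (csn m α n * (n : ℝ) * ((n : ℝ) - m) * ((n : ℝ) - m - 1))) *
          Hhat x (n - m - 1) := by
  have hc := csn_pos m α hα hα0 n hn
  obtain ⟨C, hC⟩ := seqObj_eq m α n hn x hs hc.ne'
  set T : ℝ := ∑ k ∈ Finset.Icc (n - m) n,
    α (n - k) / ((k : ℝ) * ((k : ℝ) - 1)) * (Hhat x k - Hhat x (k - 1)) with hT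
  have hlog : ∀ L : ℝ, Real.logb 2 ((2 : ℝ) ^ L) = L := fun L =>
    Real.logb_rpow (by norm_num) (by norm_num)
  have hpos : ∀ L : ℝ, (0 : ℝ) < (2 : ℝ) ^ L := fun L => Real.rpow_pos_of_pos (by norm_num) L
  -- Comparing with `μ = 2 ^ L₀` shows that every minimizer has `log₂ lam = L₀`.
  have hmin : ∀ lam : ℝ, (0 < lam ∧ ∀ μ : ℝ, 0 < μ → seqObj m α n x lam ≤ seqObj m α n x μ) →
      Real.logb 2 lam = -T / csn m α n := by
    rintro lam ⟨h0, h⟩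
    have h1 := h _ (hpos (-T / csn m α n))
    rw [hC _ h0, hC _ (hpos _), hlog] at h1
    have h2 : (Real.logb 2 lam - -T / csn m α n) ^ 2 ≤ 0 := by
      by_contra hlt
      have := mul_pos hc (not_le.mp hlt)
      rw [sub_self] at h1
      linarith
    exact sub_eq_zero.mp (pow_eq_zero_iff two_ne_zero |>.mp (le_antisymm h2 (sq_nonneg _)))
  refine ⟨⟨(2 : ℝ) ^ (-T / csn m α n), ⟨hpos _, fun μ hμ => ?_⟩, fun lam hlam => ?_⟩,
    fun lam hlam => ?_⟩
  · rw [hC _ (hpos _), hC _ hμ, hlog, sub_self]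
    have := mul_nonneg hc.le (sq_nonneg (Real.logb 2 μ - -T / csn m α n))
    linarith
  · rw [← hmin lam hlam, Real.rpow_logb (by norm_num) (by norm_num) hlam.1]
  · rw [Hhat_smul x lam hlam.1 n (hs.trans_le (sSeq_mono x (by omega))), hmin lam hlam]
    have hparts := sum_mul_sub_pred (fun k : ℕ => α (n - k) / ((k : ℝ) * ((k : ℝ) - 1)))
      (Hhat x) (n - m) n (by omega)
    simp only [Nat.sub_self, Nat.sub_sub_self (by omega : m ≤ n),
      Nat.cast_sub (by omega : m ≤ n)] at hparts
    rw [← hT] at hparts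
    have hsum : ∑ k ∈ Finset.Ico (n - m) n,
          (1 / (csn m α n * (n : ℝ) * (k : ℝ))) *
            (α (n - k) / ((k : ℝ) - 1) - α (n - k - 1) / ((k : ℝ) + 1)) * Hhat x k =
        1 / (csn m α n * n) * ∑ k ∈ Finset.Ico (n - m) n,
          (α (n - k) / ((k : ℝ) * ((k : ℝ) - 1)) -
            α (n - (k + 1)) / (((k + 1 : ℕ) : ℝ) * (((k + 1 : ℕ) : ℝ) - 1))) * Hhat x k := by
      rw [Finset.mul_sum]
      refine Finset.sum_congr rfl fun k hk => ?_
      rw [Nat.sub_sub, Nat.cast_succ, add_sub_cancel_right]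
      simp only [div_eq_mul_inv, mul_inv]
      ring
    rw [hsum, hparts]
    simp only [div_eq_mul_inv, mul_inv]
    ring
end
end
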